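/- arXiv:2006.12022 — 2 statements merged into one kernel-verified Lean document; each statement's English description precedes it below -/
import Mathlib

section
/- Let 1 ≤ q < p < ∞ and μ a probability measure on a closed set S ⊆ ℝ^d with ∫|x|^p μ(dx) < ∞. Then the p-Wasserstein ball B_δ(μ) = {ν : W_p(μ,ν) ≤ δ} (with W_p defined using a lower semicontinuous extended norm ‖·‖_* satisfying |x| ≤ c‖x‖_* for some c > 0) is compact in the q-Wasserstein distance defined with the Euclidean norm. -/
open Set MeasureTheory Filter Topology
open scoped ENNReal RealInnerProductSpace

/-- The `p`-Wasserstein "distance" on `ℝ^d` with transport cost given by an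
extended (lower semicontinuous) norm-like function `N`. -/
noncomputable def WpCost {d : ℕ} (N : EuclideanSpace ℝ (Fin d) → ℝ≥0∞) (p : ℝ)
    (μ ν : Measure (EuclideanSpace ℝ (Fin d))) : ℝ≥0∞ :=
  ⨅ π ∈ {π : Measure (EuclideanSpace ℝ (Fin d) × EuclideanSpace ℝ (Fin d)) |
      π.map Prod.fst = μ ∧ π.map Prod.snd = ν},
    (∫⁻ z, N (z.1 - z.2) ^ p ∂π) ^ (1 / p)

/-- The `q`-Wasserstein distance with respect to the Euclidean norm. -/
noncomputable def WpEucl {d : ℕ} (q : ℝ)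
    (μ ν : Measure (EuclideanSpace ℝ (Fin d))) : ℝ≥0∞ :=
  ⨅ π ∈ {π : Measure (EuclideanSpace ℝ (Fin d) × EuclideanSpace ℝ (Fin d)) |
      π.map Prod.fst = μ ∧ π.map Prod.snd = ν},
    (∫⁻ z, ENNReal.ofReal (‖z.1 - z.2‖ ^ q) ∂π) ^ (1 / q)

/-!
Since `|·| ≤ c‖·‖_*`, a bound on `W_p(μ, ν)` bounds the `p`-th moment of `ν`, so a sequence in the
ball is tight and by Prokhorov's theorem has a weakly convergent subsequence. Near-optimal couplings
with `μ` are tight as well, and lower semicontinuity of the cost keeps the bound on `W_p` at a weak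
limit of them; hence the limit measure is in the ball.

For `W_q`, a partition of unity subordinate to finitely many small balls and the complement of a
large compact set turns weak convergence into couplings: the masses of the two measures almost agree
on each piece, so all but a small mass is moved by at most `η`. As `q < p`, the uniform `p`-th
moment bound makes the contribution of the remaining mass to `∫ |x - y|^q` small.
-/

open scoped NNReal

section LowerSemicontinuous

variable {Ω : Type*} [MeasurableSpace Ω]

theorem lintegral_eq_lintegral_measure_ofReal_lt {μ : Measure Ω} [SFinite μ] {f : Ω → ℝ≥0∞}
    (hf : Measurable f) :
    ∫⁻ x, f x ∂μ = ∫⁻ t in Ioi (0 : ℝ), μ {x | ENNReal.ofReal t < f x} := by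
  have volume_section (a : ℝ≥0∞) :
      ∫⁻ t in Ioi (0 : ℝ), {t | ENNReal.ofReal t < a}.indicator 1 t = a := by
    rw [lintegral_indicator_one (measurableSet_lt (by fun_prop) measurable_const),
      Measure.restrict_apply (measurableSet_lt (by fun_prop) measurable_const)]
    induction a with
    | top => simp
    | coe r =>
      have : {t | ENNReal.ofReal t < r} ∩ Ioi 0 = Ioo 0 (r : ℝ) := by
        ext t
        simp only [mem_inter_iff, mem_ofPred_eq, mem_Ioi, mem_Ioo]
        rw [and_comm]
        exact and_congr_right fun ht => by
          rw [← ENNReal.ofReal_coe_nnreal, ENNReal.ofReal_lt_ofReal_iff_of_nonneg ht.le]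
      simp [this]
  have subgraph_measurable : MeasurableSet {z : Ω × ℝ | ENNReal.ofReal z.2 < f z.1} :=
    measurableSet_lt (by fun_prop) (by fun_prop)
  calc ∫⁻ x, f x ∂μ
      = ∫⁻ x, (∫⁻ t in Ioi (0 : ℝ), {t | ENNReal.ofReal t < f x}.indicator 1 t) ∂μ := by
        simp only [volume_section]
    _ = ∫⁻ t in Ioi (0 : ℝ), ∫⁻ x, {x | ENNReal.ofReal t < f x}.indicator 1 x ∂μ :=
        lintegral_lintegral_swap (f := fun x t => {t | ENNReal.ofReal t < f x}.indicator 1 t)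
          (measurable_one.indicator subgraph_measurable).aemeasurable
    _ = ∫⁻ t in Ioi (0 : ℝ), μ {x | ENNReal.ofReal t < f x} :=
        lintegral_congr fun t => lintegral_indicator_one (measurableSet_lt measurable_const hf)

theorem lintegral_le_liminf_lintegral_of_lowerSemicontinuous [TopologicalSpace Ω] [BorelSpace Ω]
    [HasOuterApproxClosed Ω] {ι : Type*} {L : Filter ι} [L.IsCountablyGenerated]
    {μ : ProbabilityMeasure Ω} {μs : ι → ProbabilityMeasure Ω} (hμs : Tendsto μs L (𝓝 μ))
    {f : Ω → ℝ≥0∞} (hf : LowerSemicontinuous f) :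
    ∫⁻ x, f x ∂(μ : Measure Ω) ≤ liminf (fun i => ∫⁻ x, f x ∂(μs i : Measure Ω)) L := by
  simp only [lintegral_eq_lintegral_measure_ofReal_lt hf.measurable]
  calc ∫⁻ t in Ioi (0 : ℝ), (μ : Measure Ω) {x | ENNReal.ofReal t < f x}
      ≤ ∫⁻ t in Ioi (0 : ℝ), liminf (fun i => (μs i : Measure Ω) {x | ENNReal.ofReal t < f x}) L :=
        lintegral_mono fun t => ProbabilityMeasure.le_liminf_measure_open_of_tendsto hμs
          (hf.isOpen_preimage (ENNReal.ofReal t))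
    _ ≤ liminf (fun i => ∫⁻ t in Ioi (0 : ℝ), (μs i : Measure Ω) {x | ENNReal.ofReal t < f x}) L :=
        lintegral_liminf_le fun i => Antitone.measurable fun s t hst =>
          measure_mono fun x hx => (ENNReal.ofReal_le_ofReal hst).trans_lt hx

theorem lintegral_le_of_tendsto_of_lowerSemicontinuous [TopologicalSpace Ω] [BorelSpace Ω]
    [HasOuterApproxClosed Ω] {ι : Type*} {L : Filter ι} [L.IsCountablyGenerated] [L.NeBot]
    {μ : ProbabilityMeasure Ω} {μs : ι → ProbabilityMeasure Ω} (hμs : Tendsto μs L (𝓝 μ))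
    {f : Ω → ℝ≥0∞} (hf : LowerSemicontinuous f) {b : ι → ℝ≥0∞} {B : ℝ≥0∞}
    (hb : Tendsto b L (𝓝 B)) (h : ∀ i, ∫⁻ x, f x ∂(μs i : Measure Ω) ≤ b i) :
    ∫⁻ x, f x ∂(μ : Measure Ω) ≤ B :=
  calc ∫⁻ x, f x ∂(μ : Measure Ω)
      ≤ liminf (fun i => ∫⁻ x, f x ∂(μs i : Measure Ω)) L :=
        lintegral_le_liminf_lintegral_of_lowerSemicontinuous hμs hf
    _ ≤ liminf b L := liminf_le_liminf (Eventually.of_forall h)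
    _ = B := hb.liminf_eq

end LowerSemicontinuous

section Coupling

variable {X Y : Type*} [MeasurableSpace X] [MeasurableSpace Y]

/-- `π` is a coupling (transport plan) of `μ` and `ν`: its first marginal is `μ` and its second
marginal is `ν`. -/
structure IsCoupling (π : Measure (X × Y)) (μ : Measure X) (ν : Measure Y) : Prop where
  map_fst : π.map Prod.fst = μ
  map_snd : π.map Prod.snd = ν

theorem isCoupling_iff {π : Measure (X × Y)} {μ : Measure X} {ν : Measure Y} :
    IsCoupling π μ ν ↔ π.map Prod.fst = μ ∧ π.map Prod.snd = ν :=
  ⟨fun h => ⟨h.map_fst, h.map_snd⟩, fun h => ⟨h.1, h.2⟩⟩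

namespace IsCoupling

variable {π π' : Measure (X × Y)} {μ μ' : Measure X} {ν ν' : Measure Y}

theorem lintegral_fst (h : IsCoupling π μ ν) {f : X → ℝ≥0∞} (hf : Measurable f) :
    ∫⁻ z, f z.1 ∂π = ∫⁻ x, f x ∂μ := by
  rw [← h.map_fst, lintegral_map hf measurable_fst]

theorem lintegral_snd (h : IsCoupling π μ ν) {f : Y → ℝ≥0∞} (hf : Measurable f) :
    ∫⁻ z, f z.2 ∂π = ∫⁻ y, f y ∂ν := by
  rw [← h.map_snd, lintegral_map hf measurable_snd]

theorem measure_univ_eq (h : IsCoupling π μ ν) : π univ = μ univ := by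
  rw [← h.map_fst, Measure.map_apply measurable_fst .univ, preimage_univ]

theorem isProbabilityMeasure [IsProbabilityMeasure μ] (h : IsCoupling π μ ν) :
    IsProbabilityMeasure π :=
  ⟨h.measure_univ_eq.trans measure_univ⟩

theorem add (h : IsCoupling π μ ν) (h' : IsCoupling π' μ' ν') :
    IsCoupling (π + π') (μ + μ') (ν + ν') where
  map_fst := by rw [Measure.map_add _ _ measurable_fst, h.map_fst, h'.map_fst]
  map_snd := by rw [Measure.map_add _ _ measurable_snd, h.map_snd, h'.map_snd]

theorem sum {ι : Type*} [Fintype ι] {π : ι → Measure (X × Y)} {μ : ι → Measure X}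
    {ν : ι → Measure Y} (h : ∀ i, IsCoupling (π i) (μ i) (ν i)) :
    IsCoupling (∑ i, π i) (∑ i, μ i) (∑ i, ν i) where
  map_fst := by simp only [Measure.map_finset_sum measurable_fst.aemeasurable, (h _).map_fst]
  map_snd := by simp only [Measure.map_finset_sum measurable_snd.aemeasurable, (h _).map_snd]

end IsCoupling

theorem isCoupling_inv_smul_prod {μ : Measure X} {ν : Measure Y} [IsFiniteMeasure μ]
    [IsFiniteMeasure ν] (h : μ univ = ν univ) :
    IsCoupling ((μ univ)⁻¹ • μ.prod ν) μ ν := by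
  rcases eq_or_ne (μ univ) 0 with hμ | hμ
  · rw [Measure.measure_univ_eq_zero.1 hμ, Measure.measure_univ_eq_zero.1 (h.symm.trans hμ)]
    exact ⟨by simp, by simp⟩
  · have hcancel : (μ univ)⁻¹ * μ univ = 1 := ENNReal.inv_mul_cancel hμ (measure_ne_top μ univ)
    constructor
    · rw [Measure.map_smul, Measure.map_fst_prod, ← h, smul_smul, hcancel, one_smul]
    · rw [Measure.map_smul, Measure.map_snd_prod, smul_smul, hcancel, one_smul]

theorem exists_add_eq_and_measure_univ_eq (μ : Measure X) [IsFiniteMeasure μ] {m : ℝ≥0∞}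
    (hm : m ≤ μ univ) : ∃ μ₁ μ₂ : Measure X, μ₁ + μ₂ = μ ∧ μ₁ univ = m := by
  refine ⟨(m / μ univ) • μ, (1 - m / μ univ) • μ, ?_, ?_⟩
  · rw [← add_smul, add_tsub_cancel_of_le (ENNReal.div_le_of_le_mul (by rwa [one_mul])), one_smul]
  · rw [Measure.smul_apply, smul_eq_mul]
    exact ENNReal.div_mul_cancel' (fun h => le_zero_iff.1 (h ▸ hm))
      fun h => absurd h (measure_ne_top μ univ)

theorem exists_isCoupling_of_add_eq (μ : Measure X) (ν : Measure Y) [IsFiniteMeasure μ]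
    [IsFiniteMeasure ν] : ∃ (π : Measure (X × Y)) (μ₁ μ₂ : Measure X) (ν₁ ν₂ : Measure Y),
      IsCoupling π μ₁ ν₁ ∧ π ≪ μ.prod ν ∧ μ₁ + μ₂ = μ ∧ ν₁ + ν₂ = ν ∧
        μ₂ univ = μ univ - ν univ ∧ ν₂ univ = ν univ - μ univ := by
  obtain ⟨μ₁, μ₂, hμ, hμ₁⟩ := exists_add_eq_and_measure_univ_eq μ (min_le_left _ (ν univ))
  obtain ⟨ν₁, ν₂, hν, hν₁⟩ := exists_add_eq_and_measure_univ_eq ν (min_le_right (μ univ) _)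
  have hμ₁_le : μ₁ ≤ μ := hμ ▸ Measure.le_add_right le_rfl
  have hν₁_le : ν₁ ≤ ν := hν ▸ Measure.le_add_right le_rfl
  have := isFiniteMeasure_of_le μ hμ₁_le
  have := isFiniteMeasure_of_le ν hν₁_le
  refine ⟨_, μ₁, μ₂, ν₁, ν₂, isCoupling_inv_smul_prod (hμ₁.trans hν₁.symm), ?_, hμ, hν, ?_, ?_⟩
  · exact Measure.smul_absolutelyContinuous.trans
      (hμ₁_le.absolutelyContinuous.prod hν₁_le.absolutelyContinuous)
  · rw [← tsub_min, ← hμ₁, ← hμ, Measure.add_apply,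
      ENNReal.add_sub_cancel_left (measure_ne_top μ₁ univ)]
  · rw [← tsub_min, min_comm, ← hν₁, ← hν, Measure.add_apply,
      ENNReal.add_sub_cancel_left (measure_ne_top ν₁ univ)]

theorem exists_isCoupling_sum_measure_le {ι : Type*} [Fintype ι] {μ : ι → Measure X}
    {ν : ι → Measure Y} [∀ i, IsFiniteMeasure (μ i)] [∀ i, IsFiniteMeasure (ν i)]
    (hmass : ∑ i, μ i univ = ∑ i, ν i univ) {B : Set (X × Y)}
    (hB : ∀ i, (μ i).prod (ν i) B = 0) :
    ∃ π, IsCoupling π (∑ i, μ i) (∑ i, ν i) ∧ π B ≤ ∑ i, (μ i univ - ν i univ) := by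
  choose π μ₁ μ₂ ν₁ ν₂ hπ hac hμ hν hμ₂ hν₂ using fun i => exists_isCoupling_of_add_eq (μ i) (ν i)
  have (i : ι) : IsFiniteMeasure (μ₂ i) :=
    isFiniteMeasure_of_le (μ i) (hμ i ▸ Measure.le_add_left le_rfl)
  have (i : ι) : IsFiniteMeasure (ν₂ i) :=
    isFiniteMeasure_of_le (ν i) (hν i ▸ Measure.le_add_left le_rfl)
  have hfin : ∑ i, ν i univ ≠ ∞ := ENNReal.sum_ne_top.2 fun i _ => measure_ne_top (ν i) univ
  have hrest : (∑ i, μ₂ i) univ = (∑ i, ν₂ i) univ := by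
    rw [Measure.finsetSum_apply, Measure.finsetSum_apply, ← ENNReal.add_left_inj hfin]
    conv_rhs => rw [← hmass]
    simp only [hμ₂, hν₂, ← Finset.sum_add_distrib, tsub_add_eq_max, max_comm]
  have hoff := isCoupling_inv_smul_prod hrest
  refine ⟨_, by simpa only [← Finset.sum_add_distrib, hμ, hν] using (IsCoupling.sum hπ).add hoff,
    ?_⟩
  rw [Measure.add_apply, Measure.finsetSum_apply, Finset.sum_eq_zero fun i _ => hac i (hB i),
    zero_add]
  calc _ ≤ (∑ i, μ₂ i) univ := (measure_mono (subset_univ B)).trans_eq hoff.measure_univ_eq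
    _ = ∑ i, (μ i univ - ν i univ) := by simp only [Measure.finsetSum_apply, hμ₂]

end Coupling

section WeakConvergence

section Limits

variable {X Y : Type*} [MeasurableSpace X] [MeasurableSpace Y]

theorem IsCoupling.of_tendsto [TopologicalSpace X] [TopologicalSpace Y]
    [HasOuterApproxClosed X] [HasOuterApproxClosed Y] [SecondCountableTopologyEither X Y]
    [BorelSpace X] [BorelSpace Y] {μ : ProbabilityMeasure X} {ν : ProbabilityMeasure Y}
    {ι : Type*} {L : Filter ι} [L.NeBot]
    {μs : ι → ProbabilityMeasure X} {νs : ι → ProbabilityMeasure Y}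
    {πs : ι → ProbabilityMeasure (X × Y)} {π : ProbabilityMeasure (X × Y)}
    (h : ∀ i, IsCoupling (πs i : Measure (X × Y)) (μs i : Measure X) (νs i : Measure Y))
    (hπs : Tendsto πs L (𝓝 π)) (hμs : Tendsto μs L (𝓝 μ)) (hνs : Tendsto νs L (𝓝 ν)) :
    IsCoupling (π : Measure (X × Y)) (μ : Measure X) (ν : Measure Y) where
  map_fst := congrArg ProbabilityMeasure.toMeasure <| tendsto_nhds_unique
    (ProbabilityMeasure.tendsto_map_of_tendsto_of_continuous πs π hπs continuous_fst)
    (hμs.congr fun i => Subtype.ext (h i).map_fst.symm)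
  map_snd := congrArg ProbabilityMeasure.toMeasure <| tendsto_nhds_unique
    (ProbabilityMeasure.tendsto_map_of_tendsto_of_continuous πs π hπs continuous_snd)
    (hνs.congr fun i => Subtype.ext (h i).map_snd.symm)

variable [MetricSpace X] [MetricSpace Y] [CompleteSpace X] [CompleteSpace Y]
  [SecondCountableTopology X] [SecondCountableTopology Y] [BorelSpace X] [BorelSpace Y]
  {μ : ProbabilityMeasure X} {ν : ProbabilityMeasure Y}

theorem isTightMeasureSet_range_of_tendsto {μs : ℕ → ProbabilityMeasure X}
    (hμs : Tendsto μs atTop (𝓝 μ)) :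
    IsTightMeasureSet (range fun n => (μs n : Measure X)) := by
  have hcompact : IsCompact (closure (range μs)) :=
    hμs.isCompact_insert_range.closure_of_subset (subset_insert _ _)
  refine (isTightMeasureSet_of_isCompact_closure hcompact).subset ?_
  rintro _ ⟨n, rfl⟩
  exact ⟨μs n, mem_range_self n, rfl⟩

theorem IsCoupling.exists_tendsto_subseq {μs : ℕ → ProbabilityMeasure X}
    {νs : ℕ → ProbabilityMeasure Y} {πs : ℕ → ProbabilityMeasure (X × Y)}
    (h : ∀ n, IsCoupling (πs n : Measure (X × Y)) (μs n : Measure X) (νs n : Measure Y))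
    (hμs : Tendsto μs atTop (𝓝 μ)) (hνs : Tendsto νs atTop (𝓝 ν)) :
    ∃ (π : ProbabilityMeasure (X × Y)) (φ : ℕ → ℕ), StrictMono φ ∧
      Tendsto (πs ∘ φ) atTop (𝓝 π) ∧
        IsCoupling (π : Measure (X × Y)) (μ : Measure X) (ν : Measure Y) := by
  have htight : IsTightMeasureSet {(π : Measure (X × Y)) | π ∈ range πs} := by
    refine IsTightMeasureSet.prodMk ((isTightMeasureSet_range_of_tendsto hμs).subset ?_)
      ((isTightMeasureSet_range_of_tendsto hνs).subset ?_)
    · rintro _ ⟨_, ⟨_, ⟨n, rfl⟩, rfl⟩, rfl⟩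
      exact ⟨n, (h n).map_fst.symm⟩
    · rintro _ ⟨_, ⟨_, ⟨n, rfl⟩, rfl⟩, rfl⟩
      exact ⟨n, (h n).map_snd.symm⟩
  obtain ⟨π, -, φ, hφ, hπ⟩ := (isCompact_closure_of_isTightMeasureSet htight).isSeqCompact
    fun n => subset_closure (mem_range_self n)
  exact ⟨π, φ, hφ, hπ, .of_tendsto (fun n => h (φ n)) hπ (hμs.comp hφ.tendsto_atTop)
    (hνs.comp hφ.tendsto_atTop)⟩

end Limits

section Approximation

variable {Ω : Type*} [MeasurableSpace Ω]

theorem exists_isCoupling_measure_compl_iUnion_prod_le {ι : Type*} [Fintype ι] {U : ι → Set Ω}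
    {w : ι → Ω → ℝ≥0∞} (hw : ∀ i, Measurable (w i)) (hsum : ∀ x, ∑ i, w i x = 1)
    (hsupp : ∀ i x, w i x ≠ 0 → x ∈ U i) (μ ν : Measure Ω) [IsProbabilityMeasure μ]
    [IsProbabilityMeasure ν] :
    ∃ π, IsCoupling π μ ν ∧
      π (⋃ i, U i ×ˢ U i)ᶜ ≤ ∑ i, (∫⁻ x, w i x ∂μ - ∫⁻ x, w i x ∂ν) := by
  have hdecomp (ρ : Measure Ω) : ∑ i, ρ.withDensity (w i) = ρ := by
    rw [← Measure.sum_fintype, ← withDensity_tsum hw]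
    convert withDensity_one
    ext x
    simp [tsum_fintype, hsum]
  have hfinite (ρ : Measure Ω) [IsProbabilityMeasure ρ] (i : ι) :
      IsFiniteMeasure (ρ.withDensity (w i)) :=
    isFiniteMeasure_of_le ρ ((withDensity_mono (ae_of_all ρ fun x =>
      (Finset.single_le_sum_of_canonicallyOrdered (f := (w · x)) (Finset.mem_univ i)).trans_eq
        (hsum x))).trans_eq withDensity_one)
  have hmem (ρ : Measure Ω) (i : ι) : ∀ᵐ x ∂ρ.withDensity (w i), x ∈ U i :=
    (ae_withDensity_iff (hw i)).2 (ae_of_all ρ (hsupp i))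
  have hdiag (i : ι) :
      (μ.withDensity (w i)).prod (ν.withDensity (w i)) (⋃ i, U i ×ˢ U i)ᶜ = 0 := by
    refine mem_ae_iff.1 ?_
    filter_upwards [Measure.quasiMeasurePreserving_fst.ae (hmem μ i),
      Measure.quasiMeasurePreserving_snd.ae (hmem ν i)] with z h₁ h₂
    exact mem_iUnion.2 ⟨i, h₁, h₂⟩
  have hmass : ∑ i, μ.withDensity (w i) univ = ∑ i, ν.withDensity (w i) univ := by
    simp only [← Measure.finsetSum_apply, hdecomp, measure_univ]
  simpa only [hdecomp, withDensity_apply _ .univ, Measure.restrict_univ] using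
    exists_isCoupling_sum_measure_le hmass hdiag

theorem exists_isCoupling_tendsto_measure_compl_iUnion_prod [TopologicalSpace Ω] [NormalSpace Ω]
    [OpensMeasurableSpace Ω] {ι κ : Type*} [Finite ι] {U : ι → Set Ω} (hU : ∀ i, IsOpen (U i))
    (hcover : ⋃ i, U i = univ) {L : Filter κ} {μ : ProbabilityMeasure Ω}
    {μs : κ → ProbabilityMeasure Ω} (hμs : Tendsto μs L (𝓝 μ)) :
    ∃ π : κ → Measure (Ω × Ω), (∀ k, IsCoupling (π k) (μs k : Measure Ω) (μ : Measure Ω)) ∧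
      Tendsto (fun k => π k (⋃ i, U i ×ˢ U i)ᶜ) L (𝓝 0) := by
  have := Fintype.ofFinite ι
  obtain ⟨f, hf⟩ := PartitionOfUnity.exists_isSubordinate_of_locallyFinite isClosed_univ U hU
    (locallyFinite_of_finite U) hcover.ge
  have hsum (x : Ω) : ∑ i, ENNReal.ofReal (f i x) = 1 := by
    rw [← ENNReal.ofReal_sum_of_nonneg fun i _ => f.nonneg i x, ← finsum_eq_sum_of_fintype,
      f.sum_eq_one (mem_univ x), ENNReal.ofReal_one]
  have hsupp (i : ι) (x : Ω) (hx : ENNReal.ofReal (f i x) ≠ 0) : x ∈ U i :=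
    hf i (subset_tsupport _ fun h => hx (by rw [h, ENNReal.ofReal_zero]))
  have hlim (i : ι) : Tendsto (fun k => ∫⁻ x, ENNReal.ofReal (f i x) ∂(μs k : Measure Ω)) L
      (𝓝 (∫⁻ x, ENNReal.ofReal (f i x) ∂(μ : Measure Ω))) :=
    ProbabilityMeasure.tendsto_iff_forall_lintegral_tendsto.1 hμs
      (BoundedContinuousFunction.mkOfBound (f i) 1 fun x y => Real.dist_le_of_mem_Icc_01
        ⟨f.nonneg i x, f.le_one i x⟩ ⟨f.nonneg i y, f.le_one i y⟩).nnrealPart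
  choose π hπ hπ_le using fun k => exists_isCoupling_measure_compl_iUnion_prod_le
    (fun i => by fun_prop) hsum hsupp (μs k : Measure Ω) (μ : Measure Ω)
  refine ⟨π, hπ, tendsto_of_tendsto_of_tendsto_of_le_of_le tendsto_const_nhds ?_
    (fun _ => zero_le) hπ_le⟩
  have hfin (i : ι) : ∫⁻ x, ENNReal.ofReal (f i x) ∂(μ : Measure Ω) ≠ ∞ :=
    (IsFiniteMeasure.lintegral_lt_top_of_bounded_to_ennreal _ ⟨1, fun x =>
      ENNReal.ofReal_le_one.2 (f.le_one i x)⟩).ne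
  simpa only [tsub_self, Finset.sum_const_zero] using tendsto_finsetSum Finset.univ fun i _ =>
    ENNReal.Tendsto.sub (hlim i) (tendsto_const_nhds (x := ∫⁻ x, ENNReal.ofReal (f i x) ∂μ))
      (.inl (hfin i))

theorem eventually_exists_isCoupling_measure_lt_edist_le {Ω : Type*} [MetricSpace Ω]
    [CompleteSpace Ω] [SecondCountableTopology Ω] [MeasurableSpace Ω] [BorelSpace Ω] {κ : Type*}
    {L : Filter κ} {μ : ProbabilityMeasure Ω} {μs : κ → ProbabilityMeasure Ω}
    (hμs : Tendsto μs L (𝓝 μ)) {η ε : ℝ≥0∞} (hη : η ≠ 0) (hε : ε ≠ 0) :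
    ∀ᶠ k in L, ∃ π, IsCoupling π (μs k : Measure Ω) (μ : Measure Ω) ∧
      π {z | η < edist z.1 z.2} ≤ ε := by
  obtain ⟨K, hK, hμK⟩ := isTightMeasureSet_iff_exists_isCompact_measure_compl_le.1
    (isTightMeasureSet_singleton (μ := (μ : Measure Ω))) (ε / 2) (ENNReal.half_pos hε)
  obtain ⟨t, ht, hKt⟩ := EMetric.totallyBounded_iff.1 hK.totallyBounded (η / 2)
    (ENNReal.half_pos hη)
  have := ht.to_subtype
  let U : Option t → Set Ω := fun i => i.elim Kᶜ fun x => Metric.eball x (η / 2)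
  have hU : ∀ i, IsOpen (U i)
    | none => hK.isClosed.isOpen_compl
    | some x => Metric.isOpen_eball
  have hcover : ⋃ i, U i = univ := by
    rw [iUnion_option, ← compl_subset_iff_union]
    simpa only [U, Option.elim, compl_compl, iUnion_coe_set] using hKt
  obtain ⟨π, hπ, hlim⟩ := exists_isCoupling_tendsto_measure_compl_iUnion_prod hU hcover hμs
  filter_upwards [ENNReal.tendsto_nhds_zero.1 hlim (ε / 2) (ENNReal.half_pos hε)] with k hk
  have hsub : {z : Ω × Ω | η < edist z.1 z.2} ⊆ (⋃ i, U i ×ˢ U i)ᶜ ∪ Prod.snd ⁻¹' Kᶜ := by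
    rw [← sdiff_subset_iff, sdiff_compl]
    rintro z ⟨hz, hzU⟩
    obtain ⟨i | ⟨x, hx⟩, h₁, h₂⟩ := mem_iUnion.1 hzU
    · exact h₂
    · refine absurd (mem_ofPred_eq ▸ hz) (not_lt.2 ?_)
      calc edist z.1 z.2 ≤ edist z.1 x + edist z.2 x := edist_triangle_right _ _ _
        _ ≤ η / 2 + η / 2 := add_le_add h₁.le h₂.le
        _ = η := ENNReal.add_halves η
  refine ⟨π k, hπ k, ?_⟩
  calc π k {z | η < edist z.1 z.2}
      ≤ π k (⋃ i, U i ×ˢ U i)ᶜ + π k (Prod.snd ⁻¹' Kᶜ) :=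
        (measure_mono hsub).trans (measure_union_le _ _)
    _ = π k (⋃ i, U i ×ˢ U i)ᶜ + (μ : Measure Ω) Kᶜ := by
        rw [← Measure.map_apply measurable_snd hK.isClosed.measurableSet.compl, (hπ k).map_snd]
    _ ≤ ε / 2 + ε / 2 := add_le_add hk (hμK _ rfl)
    _ = ε := ENNReal.add_halves ε

end Approximation

end WeakConvergence

section Moments

theorem rpow_le_add_indicator_add {q p : ℝ} (hq : 0 < q) (hqp : q < p) (η K t : ℝ≥0∞) :
    t ^ q ≤ η ^ q + K ^ q * {t | η < t}.indicator 1 t + t ^ p / K ^ (p - q) := by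
  rcases le_or_gt t η with htη | hηt
  · exact le_add_right (le_add_right (by gcongr))
  rcases le_or_gt t K with htK | hKt
  · refine le_add_right (le_add_left ?_)
    rw [indicator_of_mem (mem_ofPred_eq ▸ hηt), Pi.one_apply, mul_one]
    gcongr
  · refine le_add_left ?_
    have hpq : 0 < p - q := sub_pos.2 hqp
    have ht : t ^ p ≠ 0 := (ENNReal.rpow_pos_of_nonneg hKt.pos (hq.trans hqp).le).ne'
    have hK : K ^ (p - q) ≠ ∞ := ENNReal.rpow_ne_top_of_nonneg hpq.le hKt.ne_top
    rw [ENNReal.le_div_iff_mul_le (.inr ht) (.inl hK)]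
    calc t ^ q * K ^ (p - q) ≤ t ^ q * t ^ (p - q) := by gcongr
      _ = t ^ p := by rw [← ENNReal.rpow_add_of_nonneg _ _ hq.le hpq.le, add_sub_cancel]

theorem lintegral_rpow_le_add_measure_add {Ω : Type*} [MeasurableSpace Ω] {μ : Measure Ω}
    [IsProbabilityMeasure μ] {f : Ω → ℝ≥0∞} (hf : Measurable f) {q p : ℝ} (hq : 0 < q)
    (hqp : q < p) (η K : ℝ≥0∞) :
    ∫⁻ x, f x ^ q ∂μ ≤
      η ^ q + K ^ q * μ {x | η < f x} + (∫⁻ x, f x ^ p ∂μ) / K ^ (p - q) := by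
  have hset : MeasurableSet {x | η < f x} := measurableSet_lt measurable_const hf
  calc ∫⁻ x, f x ^ q ∂μ
      ≤ ∫⁻ x, (η ^ q + K ^ q * {x | η < f x}.indicator 1 x + f x ^ p / K ^ (p - q)) ∂μ :=
        lintegral_mono fun x => rpow_le_add_indicator_add hq hqp η K (f x)
    _ = η ^ q + K ^ q * μ {x | η < f x} + (∫⁻ x, f x ^ p ∂μ) / K ^ (p - q) := by
        have hind := (measurable_one (α := ℝ≥0∞)).indicator hset
        rw [lintegral_add_right _ (by fun_prop), lintegral_add_left measurable_const,
          lintegral_const_mul _ hind, lintegral_indicator_one hset, lintegral_const, measure_univ,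
          mul_one]
        simp only [div_eq_mul_inv]
        rw [lintegral_mul_const _ (by fun_prop)]

theorem exists_forall_lintegral_rpow_le {q p : ℝ} (hq : 0 < q) (hqp : q < p) {C : ℝ≥0∞}
    (hC : C ≠ ∞) {ε : ℝ≥0∞} (hε : ε ≠ 0) :
    ∃ η ≠ 0, ∃ m ≠ 0, ∀ {Ω : Type*} [MeasurableSpace Ω] {μ : Measure Ω} [IsProbabilityMeasure μ]
      {f : Ω → ℝ≥0∞}, Measurable f → ∫⁻ x, f x ^ p ∂μ ≤ C → μ {x | η < f x} ≤ m →
        ∫⁻ x, f x ^ q ∂μ ≤ ε := by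
  set κ : ℝ≥0∞ := ε / 3
  have hκ : κ ≠ 0 := ENNReal.div_ne_zero.2 ⟨hε, ENNReal.ofNat_ne_top⟩
  have htail : Tendsto (fun K : ℝ≥0∞ => C / K ^ (p - q)) (𝓝 ∞) (𝓝 0) := by
    simpa only [ENNReal.div_top] using ENNReal.Tendsto.const_div
      (ENNReal.tendsto_rpow_at_top (sub_pos.2 hqp)) (.inr hC)
  obtain ⟨K, hK⟩ : ∃ K : ℝ≥0, C / (K : ℝ≥0∞) ^ (p - q) ≤ κ :=
    ((ENNReal.tendsto_coe_nhds_top.2 tendsto_id).eventually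
      (ENNReal.tendsto_nhds_zero.1 htail κ hκ.bot_lt)).exists
  refine ⟨κ ^ q⁻¹, (ENNReal.rpow_pos_of_nonneg hκ.bot_lt (inv_nonneg.2 hq.le)).ne',
    κ / (K : ℝ≥0∞) ^ q, ENNReal.div_ne_zero.2 ⟨hκ, by finiteness⟩, fun {Ω _ μ _ f} hf hfC hfm => ?_⟩
  calc ∫⁻ x, f x ^ q ∂μ
      ≤ (κ ^ q⁻¹) ^ q + K ^ q * μ {x | κ ^ q⁻¹ < f x} + (∫⁻ x, f x ^ p ∂μ) / K ^ (p - q) :=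
        lintegral_rpow_le_add_measure_add hf hq hqp _ _
    _ ≤ κ + K ^ q * (κ / K ^ q) + C / K ^ (p - q) := by
        rw [ENNReal.rpow_inv_rpow hq.ne']
        gcongr
    _ ≤ κ + κ + κ := by
        gcongr
        exact ENNReal.mul_div_le
    _ = ε := ENNReal.add_thirds ε

variable {E : Type*} [NormedAddCommGroup E] [MeasurableSpace E] [BorelSpace E] {p : ℝ}

theorem isTightMeasureSet_of_lintegral_enorm_rpow_le [ProperSpace E] (hp : 0 < p) {M : ℝ≥0∞}
    (hM : M ≠ ∞) {A : Set (Measure E)} (hA : ∀ ρ ∈ A, ∫⁻ x, ‖x‖ₑ ^ p ∂ρ ≤ M) :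
    IsTightMeasureSet A := by
  refine isTightMeasureSet_of_tendsto_measure_norm_gt ?_
  have hlim : Tendsto (fun r : ℝ => M / ENNReal.ofReal r ^ p) atTop (𝓝 0) := by
    simpa only [Function.comp_apply, ENNReal.div_top] using ENNReal.Tendsto.const_div
      ((ENNReal.tendsto_rpow_at_top hp).comp ENNReal.tendsto_ofReal_atTop) (.inr hM)
  refine tendsto_of_tendsto_of_tendsto_of_le_of_le' tendsto_const_nhds hlim
    (Eventually.of_forall fun _ => zero_le) ?_
  filter_upwards [eventually_gt_atTop 0] with r hr
  refine iSup₂_le fun ρ hρ => ?_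
  have hsub : {x : E | r < ‖x‖} ⊆ {x | ENNReal.ofReal r ^ p ≤ ‖x‖ₑ ^ p} := fun x hx =>
    ENNReal.rpow_le_rpow ((ENNReal.ofReal_le_ofReal (le_of_lt hx)).trans_eq (ofReal_norm x)) hp.le
  calc ρ {x | r < ‖x‖} ≤ ρ {x | ENNReal.ofReal r ^ p ≤ ‖x‖ₑ ^ p} := measure_mono hsub
    _ ≤ (∫⁻ x, ‖x‖ₑ ^ p ∂ρ) / ENNReal.ofReal r ^ p :=
        meas_ge_le_lintegral_div (by fun_prop) (by simp [hr]) (by finiteness)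
    _ ≤ M / ENNReal.ofReal r ^ p := ENNReal.div_le_div_right (hA ρ hρ) _

theorem exists_tendsto_subseq_of_lintegral_enorm_rpow_le [ProperSpace E] (hp : 0 < p) {M : ℝ≥0∞}
    (hM : M ≠ ∞) {μs : ℕ → ProbabilityMeasure E}
    (hμs : ∀ n, ∫⁻ x, ‖x‖ₑ ^ p ∂(μs n : Measure E) ≤ M) :
    ∃ (μ : ProbabilityMeasure E) (φ : ℕ → ℕ), StrictMono φ ∧ Tendsto (μs ∘ φ) atTop (𝓝 μ) := by
  have htight : IsTightMeasureSet {(ρ : Measure E) | ρ ∈ range μs} := by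
    refine isTightMeasureSet_of_lintegral_enorm_rpow_le hp hM ?_
    rintro _ ⟨_, ⟨n, rfl⟩, rfl⟩
    exact hμs n
  obtain ⟨μ, -, hμ⟩ := (isCompact_closure_of_isTightMeasureSet htight).isSeqCompact
    fun n => subset_closure (mem_range_self n)
  exact ⟨μ, hμ⟩

theorem IsCoupling.lintegral_enorm_sub_rpow_le [SecondCountableTopology E] {π : Measure (E × E)}
    {μ ν : Measure E} (h : IsCoupling π μ ν) (hp : 0 ≤ p) :
    ∫⁻ z, ‖z.1 - z.2‖ₑ ^ p ∂π ≤ 2 ^ p * (∫⁻ x, ‖x‖ₑ ^ p ∂μ + ∫⁻ x, ‖x‖ₑ ^ p ∂ν) :=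
  calc ∫⁻ z, ‖z.1 - z.2‖ₑ ^ p ∂π ≤ ∫⁻ z, 2 ^ p * (‖z.1‖ₑ ^ p + ‖z.2‖ₑ ^ p) ∂π :=
        lintegral_mono fun _ => (ENNReal.rpow_le_rpow enorm_sub_le hp).trans
          (ENNReal.add_rpow_le_two_rpow_mul_rpow_add_rpow _ _ hp)
    _ = 2 ^ p * (∫⁻ x, ‖x‖ₑ ^ p ∂μ + ∫⁻ x, ‖x‖ₑ ^ p ∂ν) := by
        rw [lintegral_const_mul _ (by fun_prop), lintegral_add_left (by fun_prop),
          h.lintegral_fst (f := (‖·‖ₑ ^ p)) (by fun_prop),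
          h.lintegral_snd (f := (‖·‖ₑ ^ p)) (by fun_prop)]

theorem IsCoupling.lintegral_enorm_snd_rpow_le {π : Measure (E × E)} {μ ν : Measure E}
    (h : IsCoupling π μ ν) (hp : 0 ≤ p) :
    ∫⁻ y, ‖y‖ₑ ^ p ∂ν ≤ 2 ^ p * (∫⁻ x, ‖x‖ₑ ^ p ∂μ + ∫⁻ z, ‖z.1 - z.2‖ₑ ^ p ∂π) := by
  have henorm (x y : E) : ‖y‖ₑ ≤ ‖x‖ₑ + ‖x - y‖ₑ := by
    simpa only [sub_sub_cancel] using enorm_sub_le (a := x) (b := x - y)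
  calc ∫⁻ y, ‖y‖ₑ ^ p ∂ν = ∫⁻ z, ‖z.2‖ₑ ^ p ∂π :=
        (h.lintegral_snd (f := (‖·‖ₑ ^ p)) (by fun_prop)).symm
    _ ≤ ∫⁻ z, 2 ^ p * (‖z.1‖ₑ ^ p + ‖z.1 - z.2‖ₑ ^ p) ∂π :=
        lintegral_mono fun z => (ENNReal.rpow_le_rpow (henorm z.1 z.2) hp).trans
          (ENNReal.add_rpow_le_two_rpow_mul_rpow_add_rpow _ _ hp)
    _ = 2 ^ p * (∫⁻ x, ‖x‖ₑ ^ p ∂μ + ∫⁻ z, ‖z.1 - z.2‖ₑ ^ p ∂π) := by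
        rw [lintegral_const_mul' _ _ (by finiteness), lintegral_add_left (by fun_prop),
          h.lintegral_fst (f := (‖·‖ₑ ^ p)) (by fun_prop)]

end Moments

section Wasserstein

variable {E : Type*} [NormedAddCommGroup E] [MeasurableSpace E]

/-- The `p`-Wasserstein distance `W_p` on a normed group for the translation-invariant cost
`(x, y) ↦ N (x - y)`, where `N` may take the value `∞`. -/
noncomputable def wasserstein (N : E → ℝ≥0∞) (p : ℝ) (μ ν : Measure E) : ℝ≥0∞ :=
  ⨅ π, ⨅ _ : IsCoupling π μ ν, (∫⁻ z, N (z.1 - z.2) ^ p ∂π) ^ (1 / p)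

variable {N : E → ℝ≥0∞} {q p : ℝ}

theorem wasserstein_le_of_isCoupling {π : Measure (E × E)} {μ ν : Measure E}
    (h : IsCoupling π μ ν) : wasserstein N p μ ν ≤ (∫⁻ z, N (z.1 - z.2) ^ p ∂π) ^ (1 / p) :=
  iInf₂_le π h

theorem exists_isCoupling_lintegral_lt_of_wasserstein_lt {μ ν : Measure E} (hp : 0 < p)
    {r : ℝ≥0∞} (h : wasserstein N p μ ν < r) :
    ∃ π, IsCoupling π μ ν ∧ ∫⁻ z, N (z.1 - z.2) ^ p ∂π < r ^ p := by
  obtain ⟨π, hπ, hlt⟩ := by simpa only [wasserstein, iInf_lt_iff] using h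
  rw [one_div, ENNReal.rpow_inv_lt_iff hp] at hlt
  exact ⟨π, hπ, hlt⟩

variable [BorelSpace E]

theorem lintegral_enorm_rpow_le_of_wasserstein_lt {μ ν : Measure E} (hp : 0 < p) {c : ℝ≥0}
    (hN : ∀ x, ‖x‖ₑ ≤ c * N x) {r : ℝ≥0∞} (h : wasserstein N p μ ν < r) :
    ∫⁻ y, ‖y‖ₑ ^ p ∂ν ≤ 2 ^ p * (∫⁻ x, ‖x‖ₑ ^ p ∂μ + (c * r) ^ p) := by
  obtain ⟨π, hπ, hcost⟩ := exists_isCoupling_lintegral_lt_of_wasserstein_lt hp h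
  have hsub : ∫⁻ z, ‖z.1 - z.2‖ₑ ^ p ∂π ≤ (c * r) ^ p :=
    calc ∫⁻ z, ‖z.1 - z.2‖ₑ ^ p ∂π ≤ ∫⁻ z, c ^ p * N (z.1 - z.2) ^ p ∂π :=
          lintegral_mono fun z => by
            rw [← ENNReal.mul_rpow_of_nonneg _ _ hp.le]
            exact ENNReal.rpow_le_rpow (hN _) hp.le
      _ = c ^ p * ∫⁻ z, N (z.1 - z.2) ^ p ∂π := lintegral_const_mul' _ _ (by finiteness)
      _ ≤ c ^ p * r ^ p := by gcongr
      _ = (c * r) ^ p := (ENNReal.mul_rpow_of_nonneg _ _ hp.le).symm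
  exact (hπ.lintegral_enorm_snd_rpow_le hp.le).trans (by gcongr)

variable [CompleteSpace E] [SecondCountableTopology E]

theorem wasserstein_le_of_tendsto (hp : 0 < p) (hN : LowerSemicontinuous N)
    {μ ν : ProbabilityMeasure E} {μs νs : ℕ → ProbabilityMeasure E}
    (hμs : Tendsto μs atTop (𝓝 μ)) (hνs : Tendsto νs atTop (𝓝 ν)) {δ : ℝ≥0∞}
    (h : ∀ n, wasserstein N p (μs n : Measure E) (νs n : Measure E) ≤ δ) :
    wasserstein N p (μ : Measure E) (ν : Measure E) ≤ δ := by
  rcases eq_or_ne δ ∞ with rfl | hδ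
  · exact le_top
  choose πs hπs hcost using fun n : ℕ => exists_isCoupling_lintegral_lt_of_wasserstein_lt hp
    ((h n).trans_lt (ENNReal.lt_add_right hδ (b := ((n : ℝ≥0∞) + 1)⁻¹) (by simp)))
  obtain ⟨π, φ, hφ, hπ, hcoupling⟩ := IsCoupling.exists_tendsto_subseq
    (πs := fun n => ⟨πs n, (hπs n).isProbabilityMeasure⟩) hπs hμs hνs
  have hlsc : LowerSemicontinuous fun z : E × E => N (z.1 - z.2) ^ p :=
    ENNReal.continuous_rpow_const.comp_lowerSemicontinuous
      (hN.comp (continuous_fst.sub continuous_snd)) (ENNReal.monotone_rpow_of_nonneg hp.le)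
  have hbound : Tendsto (fun n : ℕ => (δ + ((φ n : ℝ≥0∞) + 1)⁻¹) ^ p) atTop (𝓝 (δ ^ p)) := by
    have hinv : Tendsto (fun n : ℕ => ((n : ℝ≥0∞) + 1)⁻¹) atTop (𝓝 0) := by
      exact_mod_cast (tendsto_add_atTop_iff_nat 1).2 ENNReal.tendsto_inv_nat_nhds_zero
    simpa only [add_zero, Function.comp_apply] using
      ((hinv.comp hφ.tendsto_atTop).const_add δ).ennrpow_const p
  calc wasserstein N p (μ : Measure E) (ν : Measure E)
      ≤ (∫⁻ z, N (z.1 - z.2) ^ p ∂(π : Measure (E × E))) ^ (1 / p) :=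
        wasserstein_le_of_isCoupling hcoupling
    _ ≤ δ := by
        rw [one_div, ENNReal.rpow_inv_le_iff hp]
        exact lintegral_le_of_tendsto_of_lowerSemicontinuous hπ hlsc hbound
          fun n => (hcost (φ n)).le

theorem tendsto_wasserstein_enorm_of_tendsto (hq : 0 < q) (hqp : q < p) {ι : Type*}
    {L : Filter ι} [L.IsCountablyGenerated] {μ : ProbabilityMeasure E}
    {μs : ι → ProbabilityMeasure E} (hμs : Tendsto μs L (𝓝 μ)) {M : ℝ≥0∞} (hM : M ≠ ∞)
    (hmom : ∀ i, ∫⁻ x, ‖x‖ₑ ^ p ∂(μs i : Measure E) ≤ M) :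
    Tendsto (fun i => wasserstein enorm q (μs i : Measure E) (μ : Measure E)) L (𝓝 0) := by
  rcases L.eq_or_neBot with rfl | _
  · exact tendsto_bot
  have hp : 0 < p := hq.trans hqp
  have hmom_lim : ∫⁻ x, ‖x‖ₑ ^ p ∂(μ : Measure E) ≤ M :=
    lintegral_le_of_tendsto_of_lowerSemicontinuous hμs
      (ENNReal.continuous_rpow_const.comp continuous_enorm).lowerSemicontinuous
      tendsto_const_nhds hmom
  refine ENNReal.tendsto_nhds_zero.2 fun ε hε => ?_
  obtain ⟨η, hη, m, hm, hle⟩ := exists_forall_lintegral_rpow_le hq hqp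
    (show 2 ^ p * (M + M) ≠ ∞ by finiteness) (ENNReal.rpow_pos_of_nonneg hε hq.le).ne'
  filter_upwards [eventually_exists_isCoupling_measure_lt_edist_le hμs hη hm] with i ⟨π, hπ, hπm⟩
  have := hπ.isProbabilityMeasure
  simp only [edist_eq_enorm_sub] at hπm
  refine (wasserstein_le_of_isCoupling hπ).trans ?_
  rw [one_div, ENNReal.rpow_inv_le_iff hq]
  refine hle (by fun_prop) ((hπ.lintegral_enorm_sub_rpow_le hp.le).trans ?_) hπm
  gcongr
  exact hmom i

end Wasserstein

section Euclidean

variable {d : ℕ}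

theorem WpCost_eq_wasserstein (N : EuclideanSpace ℝ (Fin d) → ℝ≥0∞) (p : ℝ)
    (μ ν : Measure (EuclideanSpace ℝ (Fin d))) : WpCost N p μ ν = wasserstein N p μ ν := by
  simp only [WpCost, wasserstein, mem_ofPred_eq, isCoupling_iff]

theorem WpEucl_eq_wasserstein {q : ℝ} (hq : 0 ≤ q) (μ ν : Measure (EuclideanSpace ℝ (Fin d))) :
    WpEucl q μ ν = wasserstein enorm q μ ν := by
  simp only [WpEucl, wasserstein, mem_ofPred_eq, isCoupling_iff,
    ← ENNReal.ofReal_rpow_of_nonneg (norm_nonneg _) hq, ofReal_norm]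

end Euclidean

theorem stmt7_general {E : Type*} [NormedAddCommGroup E] [ProperSpace E] [MeasurableSpace E]
    [BorelSpace E] {q p : ℝ} (hq : 0 < q) (hqp : q < p) {c δ : ℝ≥0} {μ : Measure E}
    [IsProbabilityMeasure μ] (hmom : Integrable (fun x => ‖x‖ ^ p) μ) {N : E → ℝ≥0∞}
    (hN : LowerSemicontinuous N) (hNc : ∀ x, ENNReal.ofReal ‖x‖ ≤ c * N x) {ν : ℕ → Measure E}
    (hν : ∀ n, IsProbabilityMeasure (ν n)) (hνball : ∀ n, wasserstein N p μ (ν n) ≤ δ) :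
    ∃ φ : ℕ → ℕ, StrictMono φ ∧ ∃ νlim : Measure E, IsProbabilityMeasure νlim ∧
      wasserstein N p μ νlim ≤ δ ∧
      Tendsto (fun n => wasserstein enorm q (ν (φ n)) νlim) atTop (𝓝 0) := by
  have hp : 0 < p := hq.trans hqp
  have hμ : ∫⁻ x, ‖x‖ₑ ^ p ∂μ ≠ ∞ := by
    simpa only [Real.enorm_rpow_of_nonneg (norm_nonneg _) hp.le, enorm_norm] using hmom.2.ne
  simp only [ofReal_norm] at hNc
  set M : ℝ≥0∞ := 2 ^ p * (∫⁻ x, ‖x‖ₑ ^ p ∂μ + (c * (δ + 1)) ^ p)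
  have hM : M ≠ ∞ := by finiteness
  have hνM (n : ℕ) : ∫⁻ x, ‖x‖ₑ ^ p ∂(ν n) ≤ M :=
    lintegral_enorm_rpow_le_of_wasserstein_lt hp hNc
      ((hνball n).trans_lt (ENNReal.lt_add_right ENNReal.coe_ne_top one_ne_zero))
  let νs (n : ℕ) : ProbabilityMeasure E := ⟨ν n, hν n⟩
  obtain ⟨νlim, φ, hφ, hlim⟩ :=
    exists_tendsto_subseq_of_lintegral_enorm_rpow_le (μs := νs) hp hM hνM
  have hball : wasserstein N p μ νlim ≤ δ :=
    wasserstein_le_of_tendsto hp hN (tendsto_const_nhds (x := ⟨μ, inferInstance⟩)) hlim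
      fun n => hνball (φ n)
  have hW : Tendsto (fun n => wasserstein enorm q (νs (φ n) : Measure E) (νlim : Measure E)) atTop
      (𝓝 0) :=
    tendsto_wasserstein_enorm_of_tendsto hq hqp hlim hM fun n => hνM (φ n)
  exact ⟨φ, hφ, νlim, inferInstance, hball, hW⟩

/-- Compactness of the `p`-Wasserstein ball in the `q`-Wasserstein distance, `1 ≤ q < p`:
every sequence in the ball has a subsequence converging (in `W_q` w.r.t. the Euclidean
norm) to an element of the ball. -/
theorem stmt7 {d : ℕ} (q p c δ : ℝ) (hq : 1 ≤ q) (hqp : q < p) (hc : 0 < c) (hδ : 0 ≤ δ)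
    (S : Set (EuclideanSpace ℝ (Fin d))) (hS : IsClosed S)
    (μ : Measure (EuclideanSpace ℝ (Fin d))) [IsProbabilityMeasure μ] (hμS : μ S = 1)
    (hmom : Integrable (fun x => ‖x‖ ^ p) μ)
    (N : EuclideanSpace ℝ (Fin d) → ℝ≥0∞) (hN : LowerSemicontinuous N)
    (hNc : ∀ x : EuclideanSpace ℝ (Fin d), ENNReal.ofReal ‖x‖ ≤ ENNReal.ofReal c * N x)
    (ν : ℕ → Measure (EuclideanSpace ℝ (Fin d)))
    (hν : ∀ n, IsProbabilityMeasure (ν n))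
    (hνball : ∀ n, WpCost N p μ (ν n) ≤ ENNReal.ofReal δ) :
    ∃ φ : ℕ → ℕ, StrictMono φ ∧
      ∃ νlim : Measure (EuclideanSpace ℝ (Fin d)), IsProbabilityMeasure νlim ∧
        WpCost N p μ νlim ≤ ENNReal.ofReal δ ∧
        Tendsto (fun n => WpEucl q (ν (φ n)) νlim) atTop (nhds 0) := by
  simp only [WpCost_eq_wasserstein, WpEucl_eq_wasserstein (zero_le_one.trans hq)] at hνball ⊢
  exact stmt7_general (c := c.toNNReal) (δ := δ.toNNReal) (one_pos.trans_le hq) hqp hmom hN hNc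
    hν hνball
end

section
/- Let p ∈ (1,∞), q = p/(p−1), μ a probability measure on ℝ^d with finite p-th moment, and let f : ℝ^d → ℝ be differentiable with ∇f continuous and |∇f(x)| ≤ c(1+|x|^{p−1}) for all x. Define V(δ) = sup{∫ f dν : W_p(μ,ν) ≤ δ} with W_p taken w.r.t. the Euclidean norm. Then lim_{δ→0} (V(δ) − V(0))/δ = (∫ |∇f(x)|^q μ(dx))^{1/q}. -/
open Set MeasureTheory Filter Topology
open scoped ENNReal RealInnerProductSpace

/-- The `p`-Wasserstein distance on `ℝ^d` with respect to the Euclidean norm. -/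
noncomputable def Wp {d : ℕ} (p : ℝ)
    (μ ν : Measure (EuclideanSpace ℝ (Fin d))) : ℝ≥0∞ :=
  ⨅ π ∈ {π : Measure (EuclideanSpace ℝ (Fin d) × EuclideanSpace ℝ (Fin d)) |
      π.map Prod.fst = μ ∧ π.map Prod.snd = ν},
    (∫⁻ z, ENNReal.ofReal (‖z.1 - z.2‖ ^ p) ∂π) ^ (1 / p)

/-! Write `f (x + h) = f x + ⟪∇ f x, h⟫ + R x h`. For every `η > 0` there are `g`, `K` with
`|R x h| ≤ g x * ‖h‖ + K * ‖h‖ ^ p` and `‖g‖_{L^q(μ)} ≤ η`: the points where the expansion has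
relative error at most `η / 2` for all displacements below a fixed length exhaust the space, and off
such a set the growth bound on `∇ f` has small `L^q(μ)` norm by absolute continuity.

Integrating along a coupling and using Hölder's inequality, moving mass by a displacement of `L^p`
norm at most `δ` raises the mean of `f` by at most `(‖∇ f‖_{L^q(μ)} + η) * δ + K * δ ^ p`. The
transport `x ↦ x + δ • T x`, where `T` attains equality in Hölder's inequality against `∇ f`, gains
at least `(‖∇ f‖_{L^q(μ)} - η) * δ - K * δ ^ p`. Hence
`|V δ - (∫ f dμ + ‖∇ f‖_{L^q(μ)} * δ)| ≤ η * δ + K * δ ^ p`, and `p > 1`. -/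

open scoped Gradient

section Remainder

variable {E F : Type*} [NormedAddCommGroup E] [NormedSpace ℝ E] [NormedAddCommGroup F]
  [NormedSpace ℝ F]

theorem add_rpow_le_two_rpow_mul_rpow_add_rpow {a s t : ℝ} (ha : 0 ≤ a) (hs : 0 ≤ s)
    (ht : 0 ≤ t) : (s + t) ^ a ≤ 2 ^ a * (s ^ a + t ^ a) := by
  have hs' := Real.rpow_nonneg hs a
  have ht' := Real.rpow_nonneg ht a
  calc (s + t) ^ a ≤ (2 * max s t) ^ a := by
        gcongr
        linarith [le_max_left s t, le_max_right s t]
    _ = 2 ^ a * max s t ^ a := Real.mul_rpow (by norm_num) (le_max_of_le_left hs)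
    _ ≤ 2 ^ a * (s ^ a + t ^ a) := by
        gcongr
        rcases max_choice s t with h | h <;> rw [h] <;> linarith

/-- The error `f (x + h) - f x - f'(x) h` of the first-order Taylor expansion of `f` at `x`. -/
noncomputable def taylorRemainder (f : E → F) (x h : E) : F :=
  f (x + h) - f x - fderiv ℝ f x h

theorem apply_add_eq_add_taylorRemainder (f : E → F) (x h : E) :
    f (x + h) = f x + fderiv ℝ f x h + taylorRemainder f x h := by
  rw [taylorRemainder]
  abel

theorem exists_norm_taylorRemainder_le_of_growth {f : E → F} (hf : Differentiable ℝ f) {a c : ℝ}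
    (ha : 0 ≤ a) (hb : ∀ x, ‖fderiv ℝ f x‖ ≤ c * (1 + ‖x‖ ^ a)) :
    ∃ C, 0 ≤ C ∧ ∀ x h, ‖taylorRemainder f x h‖ ≤ C * (1 + ‖x‖ ^ a + ‖h‖ ^ a) * ‖h‖ := by
  have hc : 0 ≤ c := nonneg_of_mul_nonneg_left ((norm_nonneg _).trans (hb 0)) (by positivity)
  refine ⟨c * (2 + 2 ^ a), by positivity, fun x h => ?_⟩
  have hosc : ∀ z ∈ segment ℝ x (x + h),
      ‖fderiv ℝ f z - fderiv ℝ f x‖ ≤ c * (2 + 2 ^ a) * (1 + ‖x‖ ^ a + ‖h‖ ^ a) := by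
    intro z hz
    have hz_norm : ‖z‖ ^ a ≤ 2 ^ a * (‖x‖ ^ a + ‖h‖ ^ a) := by
      have hzx : ‖z‖ ≤ ‖x‖ + ‖h‖ := by
        simpa using norm_le_norm_add_norm_sub' z x |>.trans
          (add_le_add_right (norm_sub_le_of_mem_segment hz) ‖x‖)
      exact (Real.rpow_le_rpow (norm_nonneg z) hzx ha).trans
        (add_rpow_le_two_rpow_mul_rpow_add_rpow ha (norm_nonneg x) (norm_nonneg h))
    have hx : 0 ≤ ‖x‖ ^ a := by positivity
    have hh : 0 ≤ ‖h‖ ^ a := by positivity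
    have h2 : (0 : ℝ) ≤ 2 ^ a := by positivity
    calc ‖fderiv ℝ f z - fderiv ℝ f x‖ ≤ c * (1 + ‖z‖ ^ a) + c * (1 + ‖x‖ ^ a) :=
          (norm_sub_le _ _).trans (add_le_add (hb z) (hb x))
      _ = c * (2 + ‖z‖ ^ a + ‖x‖ ^ a) := by ring
      _ ≤ c * ((2 + 2 ^ a) * (1 + ‖x‖ ^ a + ‖h‖ ^ a)) := by
          gcongr
          nlinarith
      _ = _ := (mul_assoc _ _ _).symm
  simpa [taylorRemainder] using (convex_segment x (x + h)).norm_image_sub_le_of_norm_fderiv_le'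
    (fun z _ => hf z) hosc (left_mem_segment ℝ x (x + h)) (right_mem_segment ℝ x (x + h))

/-- The points of the ball of radius `n` at which the first-order Taylor expansion of `f` is
accurate up to relative error `ε` for all displacements shorter than `1 / (n + 1)`. For
differentiable `f` these sets exhaust the space. -/
def uniformTaylorSet (f : E → F) (ε : ℝ) (n : ℕ) : Set E :=
  {x | ‖x‖ ≤ n ∧ ∀ h ∈ Metric.ball 0 (1 / ((n : ℝ) + 1)), ‖taylorRemainder f x h‖ ≤ ε * ‖h‖}

theorem eventually_mem_uniformTaylorSet {f : E → F} {x : E} (hf : DifferentiableAt ℝ f x) {ε : ℝ}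
    (hε : 0 < ε) : ∀ᶠ n in atTop, x ∈ uniformTaylorSet f ε n := by
  obtain ⟨r, hr, hball⟩ := Metric.eventually_nhds_iff_ball.1
    ((hasFDerivAt_iff_isLittleO_nhds_zero.1 hf.hasFDerivAt).def hε)
  filter_upwards [eventually_ge_atTop ⌈‖x‖⌉₊,
    tendsto_one_div_add_atTop_nhds_zero_nat.eventually_lt_const hr] with n hxn hrn
  exact ⟨Nat.ceil_le.1 hxn, fun h hh => hball h (Metric.ball_subset_ball hrn.le hh)⟩

theorem norm_taylorRemainder_le_of_mem_uniformTaylorSet {f : E → F} {a C ε : ℝ} {n : ℕ} {x h : E}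
    (ha : 0 ≤ a) (hC : 0 ≤ C) (hε : 0 ≤ ε)
    (hR : ‖taylorRemainder f x h‖ ≤ C * (1 + ‖x‖ ^ a + ‖h‖ ^ a) * ‖h‖)
    (hx : x ∈ uniformTaylorSet f ε n) :
    ‖taylorRemainder f x h‖ ≤
      (ε + C * ((1 + (n : ℝ) ^ a) * ((n : ℝ) + 1) ^ a + 1) * ‖h‖ ^ a) * ‖h‖ := by
  obtain ⟨hxn, hsmall⟩ := hx
  by_cases hh : h ∈ Metric.ball 0 (1 / ((n : ℝ) + 1))
  · refine (hsmall h hh).trans ?_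
    gcongr
    exact le_add_of_nonneg_right (by positivity)
  · have hlarge : 1 ≤ ((n : ℝ) + 1) ^ a * ‖h‖ ^ a := by
      rw [← Real.mul_rpow (by positivity) (norm_nonneg h)]
      refine Real.one_le_rpow ?_ ha
      rwa [mem_ball_zero_iff, not_lt, div_le_iff₀' (by positivity)] at hh
    refine hR.trans ?_
    gcongr
    calc C * (1 + ‖x‖ ^ a + ‖h‖ ^ a)
        ≤ C * ((1 + (n : ℝ) ^ a) * (((n : ℝ) + 1) ^ a * ‖h‖ ^ a) + ‖h‖ ^ a) := by
          gcongr
          calc 1 + ‖x‖ ^ a ≤ 1 + (n : ℝ) ^ a := by gcongr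
            _ ≤ _ := le_mul_of_one_le_right (by positivity) hlarge
      _ = C * ((1 + (n : ℝ) ^ a) * ((n : ℝ) + 1) ^ a + 1) * ‖h‖ ^ a := by ring
      _ ≤ _ := le_add_of_nonneg_left hε

theorem exists_norm_taylorRemainder_le_indicator {f : E → F} {a C ε : ℝ} (ha : 0 ≤ a)
    (hC : 0 ≤ C) (hε : 0 ≤ ε)
    (hR : ∀ x h, ‖taylorRemainder f x h‖ ≤ C * (1 + ‖x‖ ^ a + ‖h‖ ^ a) * ‖h‖) (n : ℕ) :
    ∃ K, 0 ≤ K ∧ ∀ x h, ‖taylorRemainder f x h‖ ≤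
      (ε + (uniformTaylorSet f ε n)ᶜ.indicator (fun x => C * (1 + ‖x‖ ^ a)) x + K * ‖h‖ ^ a) *
        ‖h‖ := by
  let K := C * ((1 + (n : ℝ) ^ a) * ((n : ℝ) + 1) ^ a + 1)
  have hCK : C ≤ K := le_mul_of_one_le_right hC (le_add_of_nonneg_left (by positivity))
  refine ⟨K, hC.trans hCK, fun x h => ?_⟩
  by_cases hx : x ∈ uniformTaylorSet f ε n
  · simpa [hx] using norm_taylorRemainder_le_of_mem_uniformTaylorSet ha hC hε (hR x h) hx
  · refine (hR x h).trans ?_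
    rw [indicator_of_mem (mem_compl hx)]
    gcongr
    calc C * (1 + ‖x‖ ^ a + ‖h‖ ^ a) = C * (1 + ‖x‖ ^ a) + C * ‖h‖ ^ a := by ring
      _ ≤ ε + C * (1 + ‖x‖ ^ a) + K * ‖h‖ ^ a := by
          gcongr
          exact le_add_of_nonneg_left hε

theorem measurableSet_setOf_forall_mem_isOpen_le {α H : Type*} [MeasurableSpace α]
    [TopologicalSpace H] [SecondCountableTopology H] {s : Set H} (hs : IsOpen s) {u v : α → H → ℝ}
    (hu : ∀ h, Measurable fun x => u x h) (hv : ∀ h, Measurable fun x => v x h)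
    (hu' : ∀ x, Continuous (u x)) (hv' : ∀ x, Continuous (v x)) :
    MeasurableSet {x | ∀ h ∈ s, u x h ≤ v x h} := by
  obtain ⟨D, hD, hdense⟩ := TopologicalSpace.exists_countable_dense H
  have heq : {x | ∀ h ∈ s, u x h ≤ v x h} = ⋂ h ∈ s ∩ D, {x | u x h ≤ v x h} := by
    ext x
    simp only [mem_iInter, mem_ofPred_eq]
    refine ⟨fun hx h hh => hx h hh.1, fun hx h hh => ?_⟩
    exact closure_minimal hx (isClosed_le (hu' x) (hv' x))
      (hdense.open_subset_closure_inter hs hh)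
  rw [heq]
  exact .biInter (hD.mono inter_subset_right) fun h _ => measurableSet_le (hu h) (hv h)

variable [MeasurableSpace E] [BorelSpace E]

theorem measurableSet_uniformTaylorSet [SecondCountableTopology E] [CompleteSpace F]
    [SecondCountableTopology F] {f : E → F} (hf : Continuous f) (ε : ℝ) (n : ℕ) :
    MeasurableSet (uniformTaylorSet f ε n) := by
  borelize F
  refine (measurableSet_le measurable_norm measurable_const).inter
    (measurableSet_setOf_forall_mem_isOpen_le Metric.isOpen_ball (fun h => ?_)
      (fun _ => measurable_const) (fun _ => ?_) (fun _ => by fun_prop))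
  · have hfh : Measurable fun x => f (x + h) := Continuous.measurable (by fun_prop)
    exact ((hfh.sub hf.measurable).sub (measurable_fderiv_apply_const ℝ f h)).norm
  · unfold taylorRemainder
    fun_prop

end Remainder

section LpNorm

variable {α E F : Type*} [MeasurableSpace α] {μ : Measure α} [NormedAddCommGroup E]
  [NormedAddCommGroup F] {p q : ℝ}

theorem memLp_ofReal_iff_integrable_norm_rpow (hp : 0 < p) {f : α → E}
    (hf : AEStronglyMeasurable f μ) :
    MemLp f (ENNReal.ofReal p) μ ↔ Integrable (fun x => ‖f x‖ ^ p) μ := by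
  rw [← integrable_norm_rpow_iff hf (by simpa using hp) ENNReal.ofReal_ne_top,
    ENNReal.toReal_ofReal hp.le]

theorem lpNorm_ofReal_eq_integral_norm_rpow (hp : 0 < p) {f : α → E}
    (hf : AEStronglyMeasurable f μ) :
    lpNorm f (ENNReal.ofReal p) μ = (∫ x, ‖f x‖ ^ p ∂μ) ^ (1 / p) := by
  rw [lpNorm_eq_integral_norm_rpow_toReal (by simpa using hp) ENNReal.ofReal_ne_top hf,
    ENNReal.toReal_ofReal hp.le, one_div]

theorem lpNorm_ofReal_rpow (hp : 0 < p) {f : α → E} (hf : AEStronglyMeasurable f μ) :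
    lpNorm f (ENNReal.ofReal p) μ ^ p = ∫ x, ‖f x‖ ^ p ∂μ := by
  rw [lpNorm_ofReal_eq_integral_norm_rpow hp hf, one_div,
    Real.rpow_inv_rpow (by positivity) hp.ne']

theorem lpNorm_comp_measurePreserving {Ω : Type*} [MeasurableSpace Ω] {P : Measure Ω} {X : Ω → α}
    (hX : MeasurePreserving X P μ) {f : α → E} (hf : AEStronglyMeasurable f μ) (p : ℝ≥0∞) :
    lpNorm (f ∘ X) p P = lpNorm f p μ := by
  rw [← toReal_eLpNorm hf, ← toReal_eLpNorm (hf.comp_measurePreserving hX),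
    eLpNorm_comp_measurePreserving hf hX]

theorem integrable_norm_mul_norm_of_holderConjugate (hpq : p.HolderConjugate q) {f : α → E}
    {g : α → F} (hf : MemLp f (ENNReal.ofReal p) μ) (hg : MemLp g (ENNReal.ofReal q) μ) :
    Integrable (fun x => ‖f x‖ * ‖g x‖) μ :=
  have : (ENNReal.ofReal p).HolderTriple (ENNReal.ofReal q) 1 := hpq.ennrealOfReal
  hf.norm.integrable_mul hg.norm

theorem integral_norm_mul_norm_le_lpNorm_mul_lpNorm (hpq : p.HolderConjugate q) {f : α → E}
    {g : α → F} (hf : MemLp f (ENNReal.ofReal p) μ) (hg : MemLp g (ENNReal.ofReal q) μ) :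
    ∫ x, ‖f x‖ * ‖g x‖ ∂μ ≤ lpNorm f (ENNReal.ofReal p) μ * lpNorm g (ENNReal.ofReal q) μ := by
  rw [lpNorm_ofReal_eq_integral_norm_rpow hpq.pos hf.1,
    lpNorm_ofReal_eq_integral_norm_rpow hpq.symm.pos hg.1]
  simpa only [norm_norm] using integral_mul_norm_le_Lp_mul_Lq hpq hf.norm hg.norm

section Inner

variable [InnerProductSpace ℝ E] {f g : α → E}

theorem integrable_inner_of_holderConjugate (hpq : p.HolderConjugate q)
    (hf : MemLp f (ENNReal.ofReal p) μ) (hg : MemLp g (ENNReal.ofReal q) μ) :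
    Integrable (fun x => ⟪f x, g x⟫) μ :=
  (integrable_norm_mul_norm_of_holderConjugate hpq hf hg).mono' (hf.1.inner hg.1)
    (.of_forall fun _ => abs_real_inner_le_norm _ _)

theorem integral_inner_le_lpNorm_mul_lpNorm (hpq : p.HolderConjugate q)
    (hf : MemLp f (ENNReal.ofReal p) μ) (hg : MemLp g (ENNReal.ofReal q) μ) :
    ∫ x, ⟪f x, g x⟫ ∂μ ≤ lpNorm f (ENNReal.ofReal p) μ * lpNorm g (ENNReal.ofReal q) μ :=
  (integral_mono (integrable_inner_of_holderConjugate hpq hf hg)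
    (integrable_norm_mul_norm_of_holderConjugate hpq hf hg) fun _ => real_inner_le_norm _ _).trans
    (integral_norm_mul_norm_le_lpNorm_mul_lpNorm hpq hf hg)

/-- The vector field of unit `L^p` norm attaining equality in Hölder's inequality against `G`, for
`p` the conjugate exponent of `q`. When `∫ ‖G‖ ^ q = 0` it vanishes, because `0⁻¹ = 0`. -/
noncomputable def holderExtremal (q : ℝ) (μ : Measure α) (G : α → E) (x : α) : E :=
  ((∫ y, ‖G y‖ ^ q ∂μ) ^ (1 - 1 / q))⁻¹ • ‖G x‖ ^ (q - 2) • G x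

variable {G : α → E}

theorem norm_holderExtremal_rpow (hpq : p.HolderConjugate q) (x : α) :
    ‖holderExtremal q μ G x‖ ^ p = (∫ y, ‖G y‖ ^ q ∂μ)⁻¹ * ‖G x‖ ^ q := by
  have hexp : 1 - 1 / q = p⁻¹ := by rw [one_div, hpq.symm.one_sub_inv]
  have hpow : ‖G x‖ ^ (q - 2) * ‖G x‖ = ‖G x‖ ^ (q - 1) := by
    rw [← Real.rpow_add_one' (norm_nonneg _) (by linarith [hpq.symm.sub_one_pos])]
    congr 1
    ring
  rw [holderExtremal, norm_smul, norm_smul, Real.norm_of_nonneg (by positivity),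
    Real.norm_of_nonneg (by positivity), hpow, hexp, Real.mul_rpow (by positivity) (by positivity),
    Real.inv_rpow (by positivity), Real.rpow_inv_rpow (by positivity) hpq.pos.ne',
    ← Real.rpow_mul (norm_nonneg _), hpq.symm.sub_one_mul_conj]

theorem memLp_holderExtremal (hpq : p.HolderConjugate q) (hG : MemLp G (ENNReal.ofReal q) μ) :
    MemLp (holderExtremal q μ G) (ENNReal.ofReal p) μ := by
  have hm : AEStronglyMeasurable (holderExtremal q μ G) μ :=
    ((hG.1.norm.aemeasurable.pow_const _).aestronglyMeasurable.smul hG.1).const_smul _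
  rw [memLp_ofReal_iff_integrable_norm_rpow hpq.pos hm]
  simp only [norm_holderExtremal_rpow hpq]
  exact ((memLp_ofReal_iff_integrable_norm_rpow hpq.symm.pos hG.1).1 hG).const_mul _

theorem lpNorm_holderExtremal_le_one (hpq : p.HolderConjugate q)
    (hG : MemLp G (ENNReal.ofReal q) μ) :
    lpNorm (holderExtremal q μ G) (ENNReal.ofReal p) μ ≤ 1 := by
  rw [lpNorm_ofReal_eq_integral_norm_rpow hpq.pos (memLp_holderExtremal hpq hG).1]
  simp only [norm_holderExtremal_rpow hpq, integral_const_mul]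
  exact Real.rpow_le_one (by positivity) inv_mul_le_one (one_div_nonneg.2 hpq.nonneg)

theorem integral_inner_holderExtremal (hq : 1 < q) (hG : AEStronglyMeasurable G μ) :
    ∫ x, ⟪G x, holderExtremal q μ G x⟫ ∂μ = lpNorm G (ENNReal.ofReal q) μ := by
  have hq0 : 0 < q := one_pos.trans hq
  have hpow : ∀ x, ‖G x‖ ^ (q - 2) * ‖G x‖ ^ 2 = ‖G x‖ ^ q := fun x => by
    rw [← Real.rpow_add_natCast' (norm_nonneg _) (by simpa using hq0.ne')]
    simp
  simp only [holderExtremal, real_inner_smul_right, real_inner_self_eq_norm_sq, hpow,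
    integral_const_mul, lpNorm_ofReal_eq_integral_norm_rpow hq0 hG]
  have hsplit := Real.rpow_sub' (x := ∫ x, ‖G x‖ ^ q ∂μ) (y := 1) (z := 1 - 1 / q) (by positivity)
    (by simp [hq0.ne'])
  rw [inv_mul_eq_div, ← sub_sub_cancel 1 (1 / q), hsplit, Real.rpow_one, sub_sub_cancel]

end Inner

theorem exists_lpNorm_indicator_compl_le [IsFiniteMeasure μ] {A : ℕ → Set α}
    (hA : ∀ n, MeasurableSet (A n)) (hmem : ∀ x, ∀ᶠ n in atTop, x ∈ A n) {p : ℝ≥0∞} (hp : 1 ≤ p)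
    (hp' : p ≠ ∞) {g : α → E} (hg : MemLp g p μ) {η : ℝ} (hη : 0 < η) :
    ∃ n, lpNorm ((A n)ᶜ.indicator g) p μ ≤ η := by
  obtain ⟨δ, hδ, hsmall⟩ := hg.eLpNorm_indicator_le hp hp' hη
  have hlim : Tendsto (fun n => μ (A n)ᶜ) atTop (𝓝 (μ ∅)) :=
    tendsto_measure_of_tendsto_indicator_of_isFiniteMeasure atTop μ (fun n => (hA n).compl)
      fun x => (hmem x).mono fun n hx => by simp [hx]
  rw [measure_empty] at hlim
  obtain ⟨n, hn⟩ := (hlim.eventually_le_const (ENNReal.ofReal_pos.2 hδ)).exists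
  refine ⟨n, ?_⟩
  rw [← toReal_eLpNorm (hg.indicator (hA n).compl).1]
  exact ENNReal.toReal_le_of_le_ofReal hη.le (hsmall _ (hA n).compl hn)

theorem integrable_comp_of_growth [IsFiniteMeasure μ] [NormedSpace ℝ E] [NormedSpace ℝ F]
    (hp : 1 ≤ p) {f : E → F} (hf : Differentiable ℝ f) {c : ℝ}
    (hb : ∀ x, ‖fderiv ℝ f x‖ ≤ c * (1 + ‖x‖ ^ (p - 1))) {Y : α → E}
    (hY : MemLp Y (ENNReal.ofReal p) μ) : Integrable (fun x => f (Y x)) μ := by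
  obtain ⟨C, -, hR⟩ := exists_norm_taylorRemainder_le_of_growth hf (sub_nonneg.2 hp) hb
  have hY1 : Integrable (fun x => ‖Y x‖) μ := (hY.integrable (by simpa using hp)).norm
  have hYp := (memLp_ofReal_iff_integrable_norm_rpow (one_pos.trans_le hp) hY.1).1 hY
  refine Integrable.mono' (((integrable_const ‖f 0‖).add (hY1.const_mul
    (‖fderiv ℝ f 0‖ + C * (1 + ‖(0 : E)‖ ^ (p - 1))))).add (hYp.const_mul C))
    (hf.continuous.comp_aestronglyMeasurable hY.1) (.of_forall fun x => ?_)
  have hpow : ‖Y x‖ ^ p = ‖Y x‖ ^ (p - 1) * ‖Y x‖ := by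
    rw [← Real.rpow_add_one' (norm_nonneg _) (by linarith), sub_add_cancel]
  calc ‖f (Y x)‖ = ‖f 0 + fderiv ℝ f 0 (Y x) + taylorRemainder f 0 (Y x)‖ := by
        rw [← apply_add_eq_add_taylorRemainder, zero_add]
    _ ≤ ‖f 0‖ + ‖fderiv ℝ f 0‖ * ‖Y x‖ +
          C * (1 + ‖(0 : E)‖ ^ (p - 1) + ‖Y x‖ ^ (p - 1)) * ‖Y x‖ :=
        norm_add₃_le.trans (add_le_add_three le_rfl ((fderiv ℝ f 0).le_opNorm _) (hR 0 (Y x)))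
    _ = _ := by
        simp only [Pi.add_apply, hpow]
        ring

theorem memLp_const_mul_one_add_norm_rpow [IsFiniteMeasure μ] (hpq : p.HolderConjugate q)
    {X : α → E} (hX : MemLp X (ENNReal.ofReal p) μ) (C : ℝ) :
    MemLp (fun x => C * (1 + ‖X x‖ ^ (p - 1))) (ENNReal.ofReal q) μ := by
  have hm : AEStronglyMeasurable (fun x => ‖X x‖ ^ (p - 1)) μ :=
    (hX.1.norm.aemeasurable.pow_const _).aestronglyMeasurable
  refine ((memLp_const (1 : ℝ)).add
    ((memLp_ofReal_iff_integrable_norm_rpow hpq.symm.pos hm).2 ?_)).const_mul C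
  refine ((memLp_ofReal_iff_integrable_norm_rpow hpq.pos hX.1).1 hX).congr
    (.of_forall fun x => ?_)
  dsimp only
  rw [Real.norm_of_nonneg (by positivity), ← Real.rpow_mul (norm_nonneg _), hpq.sub_one_mul_conj]

end LpNorm

section Expansion

theorem norm_integral_taylorRemainder_le {E F Ω : Type*} [NormedAddCommGroup E] [NormedSpace ℝ E]
    [NormedAddCommGroup F] [NormedSpace ℝ F] [MeasurableSpace E] [MeasurableSpace Ω]
    {μ : Measure E} {P : Measure Ω} {X D : Ω → E} {p q : ℝ} (hpq : p.HolderConjugate q)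
    {f : E → F} {g : E → ℝ} {K : ℝ} (hg : MemLp g (ENNReal.ofReal q) μ)
    (hR : ∀ x h, ‖taylorRemainder f x h‖ ≤ g x * ‖h‖ + K * ‖h‖ ^ p)
    (hX : MeasurePreserving X P μ) (hD : MemLp D (ENNReal.ofReal p) P) :
    ‖∫ ω, taylorRemainder f (X ω) (D ω) ∂P‖ ≤
      lpNorm g (ENNReal.ofReal q) μ * lpNorm D (ENNReal.ofReal p) P +
        K * lpNorm D (ENNReal.ofReal p) P ^ p := by
  have hgX : MemLp (g ∘ X) (ENNReal.ofReal q) P := hg.comp_measurePreserving hX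
  have hgD := integrable_norm_mul_norm_of_holderConjugate hpq.symm hgX hD
  have hDp := ((memLp_ofReal_iff_integrable_norm_rpow hpq.pos hD.1).1 hD).const_mul K
  rw [lpNorm_ofReal_rpow hpq.pos hD.1]
  calc ‖∫ ω, taylorRemainder f (X ω) (D ω) ∂P‖
      ≤ ∫ ω, ‖(g ∘ X) ω‖ * ‖D ω‖ + K * ‖D ω‖ ^ p ∂P :=
        norm_integral_le_of_norm_le (hgD.add hDp) (.of_forall fun ω => (hR _ _).trans (by
          gcongr
          exact Real.le_norm_self _))
    _ = ∫ ω, ‖(g ∘ X) ω‖ * ‖D ω‖ ∂P + K * ∫ ω, ‖D ω‖ ^ p ∂P := by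
        rw [integral_add hgD hDp, integral_const_mul]
    _ ≤ _ := by
        gcongr
        rw [← lpNorm_comp_measurePreserving hX hg.1]
        exact integral_norm_mul_norm_le_lpNorm_mul_lpNorm hpq.symm hgX hD

theorem norm_gradient_eq_norm_fderiv {E : Type*} [NormedAddCommGroup E] [InnerProductSpace ℝ E]
    [CompleteSpace E] (f : E → ℝ) (x : E) : ‖∇ f x‖ = ‖fderiv ℝ f x‖ :=
  LinearIsometryEquiv.norm_map _ _

theorem measurable_gradient {E : Type*} [NormedAddCommGroup E] [InnerProductSpace ℝ E]
    [CompleteSpace E] [MeasurableSpace E] [BorelSpace E] (f : E → ℝ) :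
    Measurable (∇ f) :=
  (InnerProductSpace.toDual ℝ E).symm.continuous.measurable.comp (measurable_fderiv ℝ f)

variable {E F : Type*} [NormedAddCommGroup E] [MeasurableSpace E] [BorelSpace E]
  [SecondCountableTopology E] {μ : Measure E} {p q : ℝ}

theorem exists_norm_taylorRemainder_le_memLp [NormedSpace ℝ E] [NormedAddCommGroup F]
    [NormedSpace ℝ F] [CompleteSpace F] [SecondCountableTopology F] [IsProbabilityMeasure μ]
    (hpq : p.HolderConjugate q) (hμ : MemLp id (ENNReal.ofReal p) μ) {f : E → F}
    (hf : Differentiable ℝ f) {c : ℝ} (hb : ∀ x, ‖fderiv ℝ f x‖ ≤ c * (1 + ‖x‖ ^ (p - 1))) {η : ℝ}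
    (hη : 0 < η) :
    ∃ (g : E → ℝ) (K : ℝ), MemLp g (ENNReal.ofReal q) μ ∧ lpNorm g (ENNReal.ofReal q) μ ≤ η ∧
      0 ≤ K ∧ ∀ x h, ‖taylorRemainder f x h‖ ≤ g x * ‖h‖ + K * ‖h‖ ^ p := by
  have hp := hpq.sub_one_pos.le
  have hq : 1 ≤ ENNReal.ofReal q := by simpa using hpq.symm.lt.le
  obtain ⟨C, hC, hR⟩ := exists_norm_taylorRemainder_le_of_growth hf hp hb
  have hG := memLp_const_mul_one_add_norm_rpow hpq hμ C
  have hA := measurableSet_uniformTaylorSet hf.continuous (η / 2)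
  obtain ⟨n, hn⟩ := exists_lpNorm_indicator_compl_le hA
    (fun x => eventually_mem_uniformTaylorSet (hf x) (half_pos hη)) hq ENNReal.ofReal_ne_top hG
    (half_pos hη)
  obtain ⟨K, hK, hle⟩ := exists_norm_taylorRemainder_le_indicator hp hC (half_pos hη).le hR n
  refine ⟨_, K, (memLp_const (η / 2)).add (hG.indicator (hA n).compl), ?_, hK, fun x h => ?_⟩
  · calc _ ≤ lpNorm (fun _ => η / 2) (ENNReal.ofReal q) μ + _ := lpNorm_add_le (memLp_const _) hq
      _ ≤ η / 2 + η / 2 := by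
          refine add_le_add ?_ hn
          simp [lpNorm_const' (one_pos.trans_le hq).ne' ENNReal.ofReal_ne_top, abs_of_pos hη]
      _ = η := add_halves η
  · have hpow : ‖h‖ ^ p = ‖h‖ ^ (p - 1) * ‖h‖ := by
      rw [← Real.rpow_add_one' (norm_nonneg h) (by linarith), sub_add_cancel]
    rw [hpow, ← mul_assoc, ← add_mul]
    exact hle x h

variable [InnerProductSpace ℝ E] [CompleteSpace E]

theorem memLp_gradient_of_growth [IsFiniteMeasure μ] (hpq : p.HolderConjugate q)
    (hμ : MemLp id (ENNReal.ofReal p) μ) {f : E → ℝ} {c : ℝ}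
    (hb : ∀ x, ‖∇ f x‖ ≤ c * (1 + ‖x‖ ^ (p - 1))) : MemLp (∇ f) (ENNReal.ofReal q) μ :=
  (memLp_const_mul_one_add_norm_rpow hpq hμ c).mono'
    (measurable_gradient f).aestronglyMeasurable (.of_forall hb)

theorem exists_abs_integral_comp_add_sub_le [IsProbabilityMeasure μ]
    (hpq : p.HolderConjugate q) (hμ : MemLp id (ENNReal.ofReal p) μ) {f : E → ℝ}
    (hf : Differentiable ℝ f) {c : ℝ} (hb : ∀ x, ‖∇ f x‖ ≤ c * (1 + ‖x‖ ^ (p - 1))) {η : ℝ}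
    (hη : 0 < η) :
    ∃ K, 0 ≤ K ∧ ∀ {Ω : Type*} [MeasurableSpace Ω] {P : Measure Ω} {X D : Ω → E},
      MeasurePreserving X P μ → MemLp D (ENNReal.ofReal p) P →
      |∫ ω, f (X ω + D ω) ∂P - (∫ x, f x ∂μ + ∫ ω, ⟪∇ f (X ω), D ω⟫ ∂P)| ≤
        η * lpNorm D (ENNReal.ofReal p) P + K * lpNorm D (ENNReal.ofReal p) P ^ p := by
  have hb' : ∀ x, ‖fderiv ℝ f x‖ ≤ c * (1 + ‖x‖ ^ (p - 1)) := fun x =>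
    (norm_gradient_eq_norm_fderiv f x).symm.trans_le (hb x)
  obtain ⟨g, K, hg, hgη, hK, hR⟩ := exists_norm_taylorRemainder_le_memLp hpq hμ hf hb' hη
  refine ⟨K, hK, fun {Ω _ P X D} hX hD => ?_⟩
  have : IsFiniteMeasure (P.map X) := by rw [hX.map_eq]; infer_instance
  have : IsFiniteMeasure P := Measure.isFiniteMeasure_of_map hX.aemeasurable
  have hXp : MemLp X (ENNReal.ofReal p) P := hμ.comp_measurePreserving hX
  have hfX := integrable_comp_of_growth hpq.lt.le hf hb' hXp
  have hfXD : Integrable (fun ω => f (X ω + D ω)) P :=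
    integrable_comp_of_growth hpq.lt.le hf hb' (hXp.add hD)
  have hinner : Integrable (fun ω => ⟪∇ f (X ω), D ω⟫) P :=
    integrable_inner_of_holderConjugate hpq.symm
      ((memLp_gradient_of_growth hpq hμ hb).comp_measurePreserving hX) hD
  have hexpand : ∫ ω, f (X ω + D ω) ∂P - (∫ x, f x ∂μ + ∫ ω, ⟪∇ f (X ω), D ω⟫ ∂P) =
      ∫ ω, taylorRemainder f (X ω) (D ω) ∂P := by
    rw [← hX.map_eq, integral_map hX.aemeasurable hf.continuous.aestronglyMeasurable,
      ← integral_add hfX hinner, ← integral_sub (by exact hfXD) (by exact hfX.add hinner)]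
    simp only [taylorRemainder, inner_gradient_left, sub_sub]
  rw [hexpand, ← Real.norm_eq_abs]
  refine (norm_integral_taylorRemainder_le hpq hg hR hX hD).trans ?_
  gcongr
  exact lpNorm_nonneg

end Expansion

section Wasserstein

/-- `π` is a coupling of `μ` and `ν`: its marginals are `μ` and `ν`. -/
structure IsCoupling_s8 {α β : Type*} [MeasurableSpace α] [MeasurableSpace β] (π : Measure (α × β))
    (μ : Measure α) (ν : Measure β) : Prop where
  fst : MeasurePreserving Prod.fst π μ
  snd : MeasurePreserving Prod.snd π ν

theorem isCoupling_map_prodMk {α β : Type*} [MeasurableSpace α] [MeasurableSpace β]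
    {μ : Measure α} {T : α → β} (hT : AEMeasurable T μ) :
    IsCoupling_s8 (μ.map fun x => (x, T x)) μ (μ.map T) where
  fst := ⟨measurable_fst, (AEMeasurable.map_map_of_aemeasurable measurable_fst.aemeasurable
    (aemeasurable_id'.prodMk hT)).trans Measure.map_id'⟩
  snd := ⟨measurable_snd, AEMeasurable.map_map_of_aemeasurable measurable_snd.aemeasurable
    (aemeasurable_id'.prodMk hT)⟩

variable {E : Type*} [NormedAddCommGroup E] [MeasurableSpace E]

/-- The `p`-Wasserstein distance on a normed space, for extended exponents `p`. -/
noncomputable def wassersteinEDist (p : ℝ≥0∞) (μ ν : Measure E) : ℝ≥0∞ :=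
  ⨅ (π : Measure (E × E)) (_ : IsCoupling_s8 π μ ν), eLpNorm (fun z => z.2 - z.1) p π

theorem Wp_eq_wassersteinEDist {d : ℕ} {p : ℝ} (hp : 0 < p)
    (μ ν : Measure (EuclideanSpace ℝ (Fin d))) :
    Wp p μ ν = wassersteinEDist (ENNReal.ofReal p) μ ν := by
  refine iInf_congr fun π => iInf_congr_Prop
    ⟨fun h => ⟨⟨measurable_fst, h.1⟩, ⟨measurable_snd, h.2⟩⟩,
      fun h => ⟨h.fst.map_eq, h.snd.map_eq⟩⟩ fun _ => ?_
  rw [eLpNorm_eq_lintegral_rpow_enorm_toReal (by simpa using hp) ENNReal.ofReal_ne_top,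
    ENNReal.toReal_ofReal hp.le]
  simp only [← ofReal_norm, ENNReal.ofReal_rpow_of_nonneg (norm_nonneg _) hp.le,
    norm_sub_rev (Prod.snd _)]

theorem exists_isCoupling_eLpNorm_lt {p : ℝ≥0∞} {μ ν : Measure E} {s : ℝ≥0∞}
    (h : wassersteinEDist p μ ν < s) :
    ∃ π : Measure (E × E), IsCoupling_s8 π μ ν ∧ eLpNorm (fun z => z.2 - z.1) p π < s := by
  simpa only [wassersteinEDist, iInf_lt_iff, exists_prop] using h

variable [BorelSpace E] [SecondCountableTopology E]

theorem wassersteinEDist_map_add_le {μ : Measure E} {D : E → E} (hD : AEMeasurable D μ)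
    (p : ℝ≥0∞) : wassersteinEDist p μ (μ.map fun x => x + D x) ≤ eLpNorm D p μ := by
  have hT : AEMeasurable (fun x => x + D x) μ := aemeasurable_id.add hD
  calc wassersteinEDist p μ (μ.map fun x => x + D x)
      ≤ eLpNorm (fun z => z.2 - z.1) p (μ.map fun x => (x, x + D x)) :=
        iInf₂_le_of_le _ (isCoupling_map_prodMk hT) le_rfl
    _ = eLpNorm D p μ := by
        rw [eLpNorm_map_measure (by fun_prop) (aemeasurable_id'.prodMk hT)]
        simp [Function.comp_def]

end Wasserstein

theorem tendsto_sub_div_of_abs_sub_le {V : ℝ → ℝ} {m L p : ℝ} (hp : 1 < p)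
    (h : ∀ η > 0, ∃ K, ∀ δ, 0 ≤ δ → |V δ - (m + L * δ)| ≤ η * δ + K * δ ^ p) :
    Tendsto (fun δ => (V δ - V 0) / δ) (𝓝[>] 0) (𝓝 L) := by
  have h0 : V 0 = m := by
    obtain ⟨K, hK⟩ := h 1 one_pos
    simpa [Real.zero_rpow (one_pos.trans hp).ne', sub_eq_zero] using hK 0 le_rfl
  rw [h0, Metric.tendsto_nhds]
  intro ε hε
  obtain ⟨K, hK⟩ := h (ε / 2) (half_pos hε)
  have hlim : Tendsto (fun δ : ℝ => K * δ ^ (p - 1)) (𝓝[>] 0) (𝓝 0) := by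
    have hcont : ContinuousAt (fun δ : ℝ => K * δ ^ (p - 1)) 0 :=
      continuousAt_const.mul (Real.continuousAt_rpow_const _ _ (.inr (sub_pos.2 hp).le))
    simpa [Real.zero_rpow (sub_pos.2 hp).ne'] using
      hcont.tendsto.mono_left (nhdsWithin_le_nhds (s := Ioi 0))
  filter_upwards [hlim.eventually_lt_const (half_pos hε), self_mem_nhdsWithin] with δ hlt hδ
  have hδ : 0 < δ := hδ
  have hquot : (V δ - m) / δ - L = (V δ - (m + L * δ)) / δ := by
    field_simp
    ring
  rw [Real.dist_eq, hquot, abs_div, abs_of_pos hδ, div_lt_iff₀ hδ]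
  calc |V δ - (m + L * δ)| ≤ ε / 2 * δ + K * δ ^ p := hK δ hδ.le
    _ = (ε / 2 + K * δ ^ (p - 1)) * δ := by
        rw [add_mul, mul_assoc K, ← Real.rpow_add_one hδ.ne', sub_add_cancel]
    _ < ε * δ := by
        gcongr
        linarith

section RobustValue

variable {E : Type*} [NormedAddCommGroup E] [MeasurableSpace E]

/-- The distributionally robust value `V(δ)` of `f`: the supremum of `∫ f dν` over the probability
measures `ν` in the `p`-Wasserstein ball of radius `δ` around `μ`. It is the junk value `0` when
these integrals are unbounded above or when there is no such `ν`. -/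
noncomputable def robustValue (p : ℝ≥0∞) (μ : Measure E) (f : E → ℝ) (δ : ℝ) : ℝ :=
  sSup {r : ℝ | ∃ ν : Measure E, IsProbabilityMeasure ν ∧
    wassersteinEDist p μ ν ≤ ENNReal.ofReal δ ∧ r = ∫ x, f x ∂ν}

variable [InnerProductSpace ℝ E] [CompleteSpace E] [BorelSpace E] [SecondCountableTopology E]
  {μ : Measure E} [IsProbabilityMeasure μ] {p q : ℝ} {f : E → ℝ} {c : ℝ}

theorem exists_integral_le_of_isCoupling (hpq : p.HolderConjugate q)
    (hμ : MemLp id (ENNReal.ofReal p) μ) (hf : Differentiable ℝ f)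
    (hb : ∀ x, ‖∇ f x‖ ≤ c * (1 + ‖x‖ ^ (p - 1))) {η : ℝ} (hη : 0 < η) :
    ∃ K, 0 ≤ K ∧ ∀ (ν : Measure E) (π : Measure (E × E)) (s : ℝ), IsCoupling_s8 π μ ν → 0 ≤ s →
      eLpNorm (fun z => z.2 - z.1) (ENNReal.ofReal p) π ≤ ENNReal.ofReal s →
        ∫ x, f x ∂ν ≤
          ∫ x, f x ∂μ + (lpNorm (∇ f) (ENNReal.ofReal q) μ + η) * s + K * s ^ p := by
  obtain ⟨K, hK, hexp⟩ := exists_abs_integral_comp_add_sub_le hpq hμ hf hb hη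
  have hG := memLp_gradient_of_growth hpq hμ hb
  refine ⟨K, hK, fun ν π s hπ hs hπs => ?_⟩
  set D : E × E → E := fun z => z.2 - z.1
  have hD : MemLp D (ENNReal.ofReal p) π :=
    ⟨(measurable_snd.sub measurable_fst).aestronglyMeasurable, hπs.trans_lt ENNReal.ofReal_lt_top⟩
  have hDs : lpNorm D (ENNReal.ofReal p) π ≤ s := by
    rw [← toReal_eLpNorm hD.1]
    exact ENNReal.toReal_le_of_le_ofReal hs hπs
  have hν : ∫ x, f x ∂ν = ∫ z, f (z.1 + D z) ∂π := by
    rw [← hπ.snd.map_eq, integral_map hπ.snd.aemeasurable hf.continuous.aestronglyMeasurable]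
    simp only [D, add_sub_cancel]
  have hinner : ∫ z, ⟪∇ f z.1, D z⟫ ∂π ≤
      lpNorm (∇ f) (ENNReal.ofReal q) μ * lpNorm D (ENNReal.ofReal p) π := by
    rw [← lpNorm_comp_measurePreserving hπ.fst hG.1]
    exact integral_inner_le_lpNorm_mul_lpNorm hpq.symm (hG.comp_measurePreserving hπ.fst) hD
  calc ∫ x, f x ∂ν
      ≤ ∫ x, f x ∂μ + (lpNorm (∇ f) (ENNReal.ofReal q) μ + η) * lpNorm D (ENNReal.ofReal p) π +
          K * lpNorm D (ENNReal.ofReal p) π ^ p := by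
        linarith [(abs_le.1 (hexp hπ.fst hD)).2]
    _ ≤ ∫ x, f x ∂μ + (lpNorm (∇ f) (ENNReal.ofReal q) μ + η) * s + K * s ^ p := by
        have hL0 : 0 ≤ lpNorm (∇ f) (ENNReal.ofReal q) μ := lpNorm_nonneg
        have hD0 : 0 ≤ lpNorm D (ENNReal.ofReal p) π := lpNorm_nonneg
        have hp0 := hpq.nonneg
        gcongr

theorem exists_integral_le_of_wassersteinEDist_le (hpq : p.HolderConjugate q)
    (hμ : MemLp id (ENNReal.ofReal p) μ) (hf : Differentiable ℝ f)
    (hb : ∀ x, ‖∇ f x‖ ≤ c * (1 + ‖x‖ ^ (p - 1))) {η : ℝ} (hη : 0 < η) :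
    ∃ K, 0 ≤ K ∧ ∀ δ, 0 ≤ δ → ∀ ν : Measure E,
      wassersteinEDist (ENNReal.ofReal p) μ ν ≤ ENNReal.ofReal δ →
        ∫ x, f x ∂ν ≤
          ∫ x, f x ∂μ + (lpNorm (∇ f) (ENNReal.ofReal q) μ + η) * δ + K * δ ^ p := by
  obtain ⟨K, hK, hcoupling⟩ := exists_integral_le_of_isCoupling hpq hμ hf hb hη
  refine ⟨K, hK, fun δ hδ ν hW => ?_⟩
  -- The infimum over couplings need not be attained, so the bound is proved at radii `s > δ` first.
  have hlt : ∀ s > δ, ∫ x, f x ∂ν ≤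
      ∫ x, f x ∂μ + (lpNorm (∇ f) (ENNReal.ofReal q) μ + η) * s + K * s ^ p := by
    intro s hs
    have hs0 : 0 < s := hδ.trans_lt hs
    obtain ⟨π, hπ, hπs⟩ := exists_isCoupling_eLpNorm_lt
      (hW.trans_lt ((ENNReal.ofReal_lt_ofReal_iff hs0).2 hs))
    exact hcoupling ν π s hπ hs0.le hπs.le
  have hcont : ContinuousAt (fun s : ℝ => ∫ x, f x ∂μ +
      (lpNorm (∇ f) (ENNReal.ofReal q) μ + η) * s + K * s ^ p) δ :=
    (continuousAt_const.add (continuousAt_const.mul continuousAt_id)).add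
      (continuousAt_const.mul (Real.continuousAt_rpow_const _ _ (.inr hpq.nonneg)))
  exact ge_of_tendsto (hcont.tendsto.mono_left (nhdsWithin_le_nhds (s := Ioi δ)))
    (eventually_mem_nhdsWithin.mono hlt)

theorem exists_le_integral_of_wassersteinEDist_le (hpq : p.HolderConjugate q)
    (hμ : MemLp id (ENNReal.ofReal p) μ) (hf : Differentiable ℝ f)
    (hb : ∀ x, ‖∇ f x‖ ≤ c * (1 + ‖x‖ ^ (p - 1))) {η : ℝ} (hη : 0 < η) :
    ∃ K, 0 ≤ K ∧ ∀ δ, 0 ≤ δ → ∃ ν : Measure E, IsProbabilityMeasure ν ∧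
      wassersteinEDist (ENNReal.ofReal p) μ ν ≤ ENNReal.ofReal δ ∧
        ∫ x, f x ∂μ + (lpNorm (∇ f) (ENNReal.ofReal q) μ - η) * δ - K * δ ^ p ≤
          ∫ x, f x ∂ν := by
  obtain ⟨K, hK, hexp⟩ := exists_abs_integral_comp_add_sub_le hpq hμ hf hb hη
  have hG := memLp_gradient_of_growth hpq hμ hb
  refine ⟨K, hK, fun δ hδ => ?_⟩
  set D : E → E := δ • holderExtremal q μ (∇ f)
  have hD : MemLp D (ENNReal.ofReal p) μ := (memLp_holderExtremal hpq hG).const_smul δ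
  have hDδ : lpNorm D (ENNReal.ofReal p) μ ≤ δ := by
    calc lpNorm D (ENNReal.ofReal p) μ
        = δ * lpNorm (holderExtremal q μ (∇ f)) (ENNReal.ofReal p) μ := by
          simpa [D, abs_of_nonneg hδ] using
            lpNorm_const_smul δ (holderExtremal q μ (∇ f)) μ (p := ENNReal.ofReal p)
      _ ≤ δ := mul_le_of_le_one_right hδ (lpNorm_holderExtremal_le_one hpq hG)
  have hT : AEMeasurable (fun x => x + D x) μ := aemeasurable_id.add hD.1.aemeasurable
  refine ⟨μ.map fun x => x + D x, Measure.isProbabilityMeasure_map hT, ?_, ?_⟩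
  · refine (wassersteinEDist_map_add_le hD.1.aemeasurable _).trans ?_
    rw [← ofReal_lpNorm hD]
    exact ENNReal.ofReal_le_ofReal hDδ
  · have hinner : ∫ x, ⟪∇ f x, D x⟫ ∂μ = δ * lpNorm (∇ f) (ENNReal.ofReal q) μ := by
      simp only [D, Pi.smul_apply, real_inner_smul_right, integral_const_mul,
        integral_inner_holderExtremal hpq.symm.lt hG.1]
    have hlower := (abs_le.1 (hexp (.id μ) hD)).1
    simp only [id, hinner] at hlower
    rw [integral_map hT hf.continuous.aestronglyMeasurable]
    have herr : η * lpNorm D (ENNReal.ofReal p) μ + K * lpNorm D (ENNReal.ofReal p) μ ^ p ≤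
        η * δ + K * δ ^ p := by
      have hD0 : 0 ≤ lpNorm D (ENNReal.ofReal p) μ := lpNorm_nonneg
      have hp0 := hpq.nonneg
      gcongr
    linarith

theorem exists_abs_robustValue_sub_le (hpq : p.HolderConjugate q)
    (hμ : MemLp id (ENNReal.ofReal p) μ) (hf : Differentiable ℝ f)
    (hb : ∀ x, ‖∇ f x‖ ≤ c * (1 + ‖x‖ ^ (p - 1))) {η : ℝ} (hη : 0 < η) :
    ∃ K, ∀ δ, 0 ≤ δ → |robustValue (ENNReal.ofReal p) μ f δ -
      (∫ x, f x ∂μ + lpNorm (∇ f) (ENNReal.ofReal q) μ * δ)| ≤ η * δ + K * δ ^ p := by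
  obtain ⟨K₁, hK₁, hupper⟩ := exists_integral_le_of_wassersteinEDist_le hpq hμ hf hb hη
  obtain ⟨K₂, hK₂, hlower⟩ := exists_le_integral_of_wassersteinEDist_le hpq hμ hf hb hη
  refine ⟨K₁ + K₂, fun δ hδ => ?_⟩
  obtain ⟨ν, hν, hW, hle⟩ := hlower δ hδ
  have hub : ∫ x, f x ∂μ + (lpNorm (∇ f) (ENNReal.ofReal q) μ + η) * δ + K₁ * δ ^ p ∈
      upperBounds {r : ℝ | ∃ ν : Measure E, IsProbabilityMeasure ν ∧
      wassersteinEDist (ENNReal.ofReal p) μ ν ≤ ENNReal.ofReal δ ∧ r = ∫ x, f x ∂ν} := by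
    rintro _ ⟨ν, -, hW, rfl⟩
    exact hupper δ hδ ν hW
  have hV_le : robustValue (ENNReal.ofReal p) μ f δ ≤ _ := csSup_le ⟨_, ν, hν, hW, rfl⟩ hub
  have hle_V : _ ≤ robustValue (ENNReal.ofReal p) μ f δ :=
    hle.trans (le_csSup ⟨_, hub⟩ ⟨ν, hν, hW, rfl⟩)
  have hK₁δ : 0 ≤ K₁ * δ ^ p := by positivity
  have hK₂δ : 0 ≤ K₂ * δ ^ p := by positivity
  rw [abs_le]
  constructor <;> linarith

end RobustValue

theorem stmt8_general {E : Type*} [NormedAddCommGroup E] [InnerProductSpace ℝ E] [CompleteSpace E]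
    [SecondCountableTopology E] [MeasurableSpace E] [BorelSpace E] {p q : ℝ}
    (hpq : p.HolderConjugate q) {μ : Measure E} [IsProbabilityMeasure μ]
    (hmom : Integrable (fun x => ‖x‖ ^ p) μ) {f : E → ℝ} (hf : Differentiable ℝ f) {c : ℝ}
    (hb : ∀ x, ‖∇ f x‖ ≤ c * (1 + ‖x‖ ^ (p - 1))) :
    Tendsto (fun δ => (robustValue (ENNReal.ofReal p) μ f δ -
      robustValue (ENNReal.ofReal p) μ f 0) / δ) (𝓝[>] 0)
      (𝓝 ((∫ x, ‖∇ f x‖ ^ q ∂μ) ^ (1 / q))) := by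
  have hμ : MemLp id (ENNReal.ofReal p) μ :=
    (memLp_ofReal_iff_integrable_norm_rpow hpq.pos aestronglyMeasurable_id).2 hmom
  rw [← lpNorm_ofReal_eq_integral_norm_rpow hpq.symm.pos
    (measurable_gradient f).aestronglyMeasurable]
  exact tendsto_sub_div_of_abs_sub_le hpq.lt fun η hη =>
    exists_abs_robustValue_sub_le hpq hμ hf hb hη

/-- First-order sensitivity of the Wasserstein distributionally robust value (no action,
Euclidean norm): with `V(δ) = sup {∫ f dν : W_p(μ,ν) ≤ δ}`,
`lim_{δ→0⁺} (V(δ) − V(0))/δ = (∫ |∇f|^q dμ)^{1/q}` where `q = p/(p−1)`. -/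
theorem stmt8 {d : ℕ} (p : ℝ) (hp : 1 < p) (q : ℝ) (hq : q = p / (p - 1))
    (μ : Measure (EuclideanSpace ℝ (Fin d))) [IsProbabilityMeasure μ]
    (hmom : Integrable (fun x => ‖x‖ ^ p) μ)
    (f : EuclideanSpace ℝ (Fin d) → ℝ) (hf : Differentiable ℝ f)
    (hgrad : Continuous fun x => gradient f x)
    (c : ℝ) (hc : 0 < c)
    (hb : ∀ x, ‖gradient f x‖ ≤ c * (1 + ‖x‖ ^ (p - 1))) :
    Tendsto
      (fun δ : ℝ =>
        (sSup {r : ℝ | ∃ ν : Measure (EuclideanSpace ℝ (Fin d)), IsProbabilityMeasure ν ∧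
            Wp p μ ν ≤ ENNReal.ofReal δ ∧ r = ∫ x, f x ∂ν}
          - sSup {r : ℝ | ∃ ν : Measure (EuclideanSpace ℝ (Fin d)), IsProbabilityMeasure ν ∧
            Wp p μ ν ≤ ENNReal.ofReal (0 : ℝ) ∧ r = ∫ x, f x ∂ν}) / δ)
      (nhdsWithin 0 (Set.Ioi 0))
      (nhds ((∫ x, ‖gradient f x‖ ^ q ∂μ) ^ (1 / q))) := by
  simp only [Wp_eq_wassersteinEDist (one_pos.trans hp)]
  exact stmt8_general ((Real.holderConjugate_iff_eq_conjExponent hp).2 hq) hmom hf hb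
end
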